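/- Suppose n ≥ 3. Let φ be the restriction to B of a Möbius transformation of ℝ̂ⁿ with φ(B) ⊆ B and let ψ = c·|Dφ|^{(n−2)/2} for a constant c. Then W_{φ,ψ} is bounded on h¹(B) with ‖W_{φ,ψ}‖_{h¹→h¹} ≤ (1+|φ(0)|)·(1−|φ(0)|)^{1−n}·|ψ(0)|. -/

import Mathlib

/-!
Write `w = |Dφ|^{(n-2)/2}`, so that `ψ = c w`, and let `P(x, ζ)` be the Poisson kernel of the ball.

* Conformal covariance. A Möbius transformation is a similarity or an inversion followed by a
  similarity (`mobius_form`), so by the chain rule or the Kelvin transform (`harmOn_kelvin`) the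
  function `w · (u ∘ φ)` is harmonic in the ball whenever `u` is (`mobius_weight`). In particular
  `W f` is harmonic.

* The estimate. By Poisson's formula `|f (R y)| ≤ ∫ |f (R ζ)| P(y, ζ) dσ(ζ)` for `R < 1`. Put
  `y = φ (r ξ)`, multiply by `w (r ξ)` and integrate in `ξ`. After Fubini's theorem the inner
  integral is the mean over the sphere of radius `r` of the harmonic function `w · P(φ ·, ζ)`, which
  is `w(0) P(φ(0), ζ)` by the mean value property, and
  `P(φ(0), ζ) ≤ (1 + |φ(0)|) (1 - |φ(0)|)^{1-n}`. This bounds the spherical means of `w |f(R φ)|` by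
  the norm of `f` (`integral_wco_dilate_le`), and `R → 1` finishes (`integral_wco_le`).

The potential theory rests only on the invariance of the surface measure under rotations. Integrating
the infinitesimal rotations `xᵢ ∂ⱼ - xⱼ ∂ᵢ` gives the divergence theorem on the unit sphere for
divergence-free fields (`integral_flux`), hence Green's identity, the mean value property
(`integral_ray`), and the fact that `∫ f(s ζ) u(t ζ) dσ(ζ)` depends only on `s t`
(`integral_ray_mul`). With `u = P(·, η)` and `t → 1`, where `u` concentrates at `η`, the last fact is
Poisson's formula (`poisson_formula`).
-/

open MeasureTheory Metric Set Filter
open scoped ENNReal NNReal Topology InnerProductSpace Classical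

noncomputable section

/-- Euclidean space `ℝⁿ`. -/
abbrev Eucl (n : ℕ) := EuclideanSpace ℝ (Fin n)

/-- The open unit ball `B` in `ℝⁿ`. -/
def uBall (n : ℕ) : Set (Eucl n) := Metric.ball 0 1

/-- The unit sphere `S = ∂B` in `ℝⁿ`. -/
def uSphere (n : ℕ) : Set (Eucl n) := Metric.sphere 0 1

/-- The normalized surface area measure `σ` on the unit sphere (as a measure on `ℝⁿ`
supported on `S`), normalized so that `σ(S) = 1`. -/
def sphMeasure (n : ℕ) : Measure (Eucl n) :=
  ((Measure.hausdorffMeasure ((n : ℝ) - 1) (uSphere n))⁻¹ : ℝ≥0∞) •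
    (Measure.hausdorffMeasure ((n : ℝ) - 1) : Measure (Eucl n)).restrict (uSphere n)

/-- `i`-th standard basis vector of `ℝⁿ`. -/
def basisV (n : ℕ) (i : Fin n) : Eucl n := EuclideanSpace.single i 1

/-- The Laplacian `Δf(x) = ∑ᵢ ∂²f/∂xᵢ²(x)`. -/
def lap {n : ℕ} {F : Type*} [NormedAddCommGroup F] [NormedSpace ℝ F]
    (f : Eucl n → F) (x : Eucl n) : F :=
  ∑ i : Fin n, iteratedFDeriv ℝ 2 f x ![basisV n i, basisV n i]

/-- `f` is harmonic on `s`: twice continuously differentiable with vanishing Laplacian. -/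
def HarmOn {n : ℕ} {F : Type*} [NormedAddCommGroup F] [NormedSpace ℝ F]
    (f : Eucl n → F) (s : Set (Eucl n)) : Prop :=
  ContDiffOn ℝ 2 f s ∧ ∀ x ∈ s, lap f x = 0

/-- The Jacobian matrix `Dφ(x) = (∂φ⁽ⁱ⁾/∂xⱼ)` of a map `φ : ℝⁿ → ℝⁿ`. -/
def jacMatrix {n : ℕ} (φ : Eucl n → Eucl n) (x : Eucl n) : Matrix (Fin n) (Fin n) ℝ :=
  Matrix.of fun i j => fderiv ℝ φ x (basisV n j) i

/-- `|Dφ(x)| := |J_φ(x)|^{1/n}`, where `J_φ` is the Jacobian determinant. -/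
def normDeriv {n : ℕ} (φ : Eucl n → Eucl n) (x : Eucl n) : ℝ :=
  |(jacMatrix φ x).det| ^ ((n : ℝ)⁻¹)

/-- The weighted composition operator `W_{φ,ψ} f = ψ · (f ∘ φ)`. -/
def wco {n : ℕ} (φ : Eucl n → Eucl n) (ψ : Eucl n → ℂ) (f : Eucl n → ℂ) : Eucl n → ℂ :=
  fun x => ψ x * f (φ x)

/-- The set of values `(∫_S |f(rζ)|^p dσ(ζ))^{1/p}`, `0 ≤ r < 1`. -/
def hpNormSet (n : ℕ) (p : ℝ) (f : Eucl n → ℂ) : Set ℝ :=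
  (fun r : ℝ => (∫ ζ, ‖f (r • ζ)‖ ^ p ∂(sphMeasure n)) ^ (1 / p)) '' Set.Ico (0 : ℝ) 1

/-- The set of values `|f(x)|`, `x ∈ B`. -/
def hInfSet (n : ℕ) (f : Eucl n → ℂ) : Set ℝ := (fun x => ‖f x‖) '' uBall n

/-- Membership in the harmonic Hardy space `h^p(B)`, `1 ≤ p ≤ ∞`. -/
def MemHp (n : ℕ) (p : ℝ≥0∞) (f : Eucl n → ℂ) : Prop :=
  HarmOn f (uBall n) ∧
    if p = ⊤ then BddAbove (hInfSet n f) else BddAbove (hpNormSet n p.toReal f)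

/-- The `h^p(B)` norm, `1 ≤ p ≤ ∞`. -/
def hpNorm (n : ℕ) (p : ℝ≥0∞) (f : Eucl n → ℂ) : ℝ :=
  if p = ⊤ then sSup (hInfSet n f) else sSup (hpNormSet n p.toReal f)

/-- The operator norm of a map `T` on `h^p(B)`. -/
def opNormHp (n : ℕ) (p : ℝ≥0∞) (T : (Eucl n → ℂ) → (Eucl n → ℂ)) : ℝ :=
  sInf {C : ℝ | 0 ≤ C ∧ ∀ f, MemHp n p f → hpNorm n p (T f) ≤ C * hpNorm n p f}

/-- The one-point compactification `ℝ̂ⁿ = ℝⁿ ∪ {∞}`. -/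
abbrev EuclHat (n : ℕ) := OnePoint (Eucl n)

/-- Reflection in the sphere `S(a, r)`, as a self-map of `ℝ̂ⁿ`:
`x ↦ a + r²(x−a)/|x−a|²`, with `a ↦ ∞` and `∞ ↦ a`. -/
def sphereRefl (n : ℕ) (a : Eucl n) (r : ℝ) : EuclHat n → EuclHat n :=
  OnePoint.rec (↑a)
    (fun x => if x = a then OnePoint.infty
      else ↑(a + (r ^ 2 / ‖x - a‖ ^ 2) • (x - a)))

/-- Reflection in the hyperplane `{x : x·a = t}` (`a` a unit vector), as a self-map of `ℝ̂ⁿ`: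
`x ↦ x − 2(x·a − t)a`, with `∞ ↦ ∞`. -/
def hyperRefl (n : ℕ) (a : Eucl n) (t : ℝ) : EuclHat n → EuclHat n :=
  OnePoint.rec OnePoint.infty
    (fun x => ↑(x - (2 * (⟪x, a⟫_ℝ - t)) • a))

/-- A reflection of `ℝ̂ⁿ` in a sphere or a hyperplane. -/
def IsReflection (n : ℕ) (f : EuclHat n → EuclHat n) : Prop :=
  (∃ a r, 0 < r ∧ f = sphereRefl n a r) ∨
    (∃ a t, ‖a‖ = 1 ∧ f = hyperRefl n a t)

/-- A Möbius transformation of `ℝ̂ⁿ`: a finite composition of reflections in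
spheres or hyperplanes. -/
def IsMobiusHat (n : ℕ) (g : EuclHat n → EuclHat n) : Prop :=
  ∃ L : List (EuclHat n → EuclHat n), L ≠ [] ∧ (∀ f ∈ L, IsReflection n f) ∧
    g = L.foldr (· ∘ ·) id

/-- `φ : ℝⁿ → ℝⁿ` is, on `Ω`, the restriction of a Möbius transformation of `ℝ̂ⁿ`. -/
def IsMobiusRestr (n : ℕ) (φ : Eucl n → Eucl n) (Ω : Set (Eucl n)) : Prop :=
  ∃ g : EuclHat n → EuclHat n, IsMobiusHat n g ∧ ∀ x ∈ Ω, g ↑x = ↑(φ x)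

/-- `φ ∈ Möb(B)`: `φ` agrees, on an open neighborhood of the closed unit ball, with a
Möbius transformation of `ℝ̂ⁿ`, and `φ` maps `B` bijectively onto `B`.  (Such a `φ` is
the canonical extension of the Möbius transformation to the closed unit ball.) -/
def IsMobiusBall (n : ℕ) (φ : Eucl n → Eucl n) : Prop :=
  (∃ U : Set (Eucl n), IsOpen U ∧ Metric.closedBall 0 1 ⊆ U ∧ IsMobiusRestr n φ U) ∧
    Set.BijOn φ (uBall n) (uBall n)

/-- The nontangential approach region `Γ_δ(ζ) = {x ∈ B : |x − ζ| < (δ/2)(1 − |x|²)}`. -/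
def ntRegion (n : ℕ) (δ : ℝ) (ζ : Eucl n) : Set (Eucl n) :=
  {x | x ∈ uBall n ∧ ‖x - ζ‖ < δ / 2 * (1 - ‖x‖ ^ 2)}

/-- `g` has nontangential limit `L` at `ζ ∈ S`. -/
def HasNTLimit (n : ℕ) (g : Eucl n → ℂ) (ζ : Eucl n) (L : ℂ) : Prop :=
  ∀ δ : ℝ, 1 < δ → Filter.Tendsto g (nhdsWithin ζ (ntRegion n δ ζ)) (nhds L)

/-- The Poisson kernel `P(x, ζ) = (1 − |x|²)/|x − ζ|ⁿ` for the unit ball. -/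
def poissonK (n : ℕ) (x ζ : Eucl n) : ℝ := (1 - ‖x‖ ^ 2) / ‖x - ζ‖ ^ n

/-- The extended Poisson kernel `P_y(x) = (1 − |x|²|y|²)/(1 − 2x·y + |x|²|y|²)^{n/2}`. -/
def extPoisson (n : ℕ) (y x : Eucl n) : ℝ :=
  (1 - ‖x‖ ^ 2 * ‖y‖ ^ 2) / (1 - 2 * ⟪x, y⟫_ℝ + ‖x‖ ^ 2 * ‖y‖ ^ 2) ^ ((n : ℝ) / 2)

/-- The Gauss hypergeometric function `₂F₁(a, b; c; r) = ∑ₖ (a)ₖ(b)ₖ/((c)ₖ k!) rᵏ`. -/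
def gaussHyper (a b c r : ℝ) : ℝ :=
  ∑' k : ℕ, ((ascPochhammer ℝ k).eval a * (ascPochhammer ℝ k).eval b) /
    ((ascPochhammer ℝ k).eval c * (Nat.factorial k)) * r ^ k

/-- A linear operator on (the function class) `h^p(B)`. -/
def IsLinOnHp (n : ℕ) (p : ℝ≥0∞) (T : (Eucl n → ℂ) → (Eucl n → ℂ)) : Prop :=
  (∀ f, MemHp n p f → MemHp n p (T f)) ∧
    (∀ f g, MemHp n p f → MemHp n p g → T (f + g) = T f + T g) ∧
    (∀ (c : ℂ) (f), MemHp n p f → T (c • f) = c • T f)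

/-- A compact operator on `h^p(B)`: a linear operator mapping the unit ball of `h^p(B)`
to a totally bounded set. -/
def IsCompactOnHp (n : ℕ) (p : ℝ≥0∞) (K : (Eucl n → ℂ) → (Eucl n → ℂ)) : Prop :=
  IsLinOnHp n p K ∧
    ∀ ε : ℝ, 0 < ε → ∃ G : Finset (Eucl n → ℂ),
      ∀ f, MemHp n p f → hpNorm n p f ≤ 1 → ∃ g ∈ G, hpNorm n p (K f - g) ≤ ε

/-- The essential norm of an operator `T` on `h^p(B)`: the distance, in operator norm,
from `T` to the compact operators on `h^p(B)`. -/
def essNormHp (n : ℕ) (p : ℝ≥0∞) (T : (Eucl n → ℂ) → (Eucl n → ℂ)) : ℝ :=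
  sInf {c : ℝ | ∃ K, IsCompactOnHp n p K ∧ opNormHp n p (fun f => T f - K f) = c}

/-- The duality pairing `⟨f, g⟩ = ∫_S f* g* dσ`, relative to a boundary-function
assignment `bd`. -/
def hpPairing (n : ℕ) (bd : (Eucl n → ℂ) → (Eucl n → ℂ)) (f g : Eucl n → ℂ) : ℂ :=
  ∫ ζ, bd f ζ * bd g ζ ∂(sphMeasure n)

end

/-! ### Surface measure and integration over the sphere -/

/-- A measure on the unit sphere is rotation invariant if integrals over it do not change
under linear isometries of the ambient space. -/
def RotInv {n : ℕ} (ν : Measure (uSphere n)) : Prop :=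
  ∀ (A : Eucl n ≃ₗᵢ[ℝ] Eucl n) (g : Eucl n → ℂ),
    ∫ ζ : uSphere n, g (A ζ) ∂ν = ∫ ζ : uSphere n, g ζ ∂ν

instance instCompactSpaceUSphere (n : ℕ) : CompactSpace (uSphere n) :=
  isCompact_iff_compactSpace.mp (isCompact_sphere _ _)

lemma norm_uSphere {n : ℕ} (ζ : uSphere n) : ‖(ζ : Eucl n)‖ = 1 := by
  simpa [uSphere] using ζ.2

lemma integrable_sphere {n : ℕ} {F : Type*} [NormedAddCommGroup F]
    {ν : Measure (uSphere n)} [IsFiniteMeasure ν] {g : uSphere n → F} (hg : Continuous g) :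
    Integrable g ν :=
  hg.integrable_of_hasCompactSupport (HasCompactSupport.of_compactSpace g)

lemma sphMeasure_map (n : ℕ) (A : Eucl n ≃ₗᵢ[ℝ] Eucl n) :
    (sphMeasure n).map A = sphMeasure n := by
  have hpre : A ⁻¹' uSphere n = uSphere n := by
    ext x; simp [uSphere]
  unfold sphMeasure
  rw [Measure.map_smul]
  congr 1
  conv_lhs => rw [← hpre]
  have hS : MeasurableSet (uSphere n) := isClosed_sphere.measurableSet
  rw [← Measure.restrict_map A.continuous.measurable hS]
  congr 1
  exact A.toIsometryEquiv.map_hausdorffMeasure _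

/-- The normalized surface measure, read on the sphere as a subtype, is a rotation-invariant
probability measure, unless the Hausdorff measure of the sphere is `0` or `∞`; in those cases
`sphMeasure` is the zero measure by the conventions on `∞⁻¹` and `0 • ·`. In this form neither
positivity nor finiteness of the Hausdorff measure is needed. -/
lemma sphMeasure_cases (n : ℕ) : sphMeasure n = 0 ∨
    ∃ ν : Measure (uSphere n), IsProbabilityMeasure ν ∧ RotInv ν ∧
      ∀ g : Eucl n → ℝ, ∫ ζ, g ζ ∂(sphMeasure n) = ∫ ζ : uSphere n, g ζ ∂ν := by
  by_cases h0 : (Measure.hausdorffMeasure ((n : ℝ) - 1) : Measure (Eucl n)) (uSphere n) = 0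
  · left
    unfold sphMeasure
    rw [Measure.restrict_eq_zero.mpr h0, smul_zero]
  by_cases ht : (Measure.hausdorffMeasure ((n : ℝ) - 1) : Measure (Eucl n)) (uSphere n) = ⊤
  · left
    unfold sphMeasure
    rw [ht, ENNReal.inv_top, zero_smul]
  right
  have hS : MeasurableSet (uSphere n) := isClosed_sphere.measurableSet
  have hres : (sphMeasure n).restrict (uSphere n) = sphMeasure n := by
    unfold sphMeasure
    rw [Measure.restrict_smul, Measure.restrict_restrict hS, inter_self]
  have hinteg : ∀ {F : Type} [NormedAddCommGroup F] [NormedSpace ℝ F] (g : Eucl n → F),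
      ∫ ζ, g ζ ∂(sphMeasure n) =
        ∫ ζ : uSphere n, g ζ ∂((sphMeasure n).comap Subtype.val) := by
    intro F _ _ g
    rw [integral_subtype_comap hS, hres]
  refine ⟨(sphMeasure n).comap Subtype.val, ⟨?_⟩, ?_, fun g => hinteg g⟩
  · rw [(MeasurableEmbedding.subtype_coe hS).comap_apply, image_univ, Subtype.range_coe]
    unfold sphMeasure
    rw [Measure.smul_apply, Measure.restrict_apply_self, smul_eq_mul,
      ENNReal.inv_mul_cancel h0 ht]
  · intro A g
    rw [← hinteg (fun x => g (A x)), ← hinteg g]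
    conv_rhs => rw [← sphMeasure_map n A]
    exact (A.toHomeomorph.measurableEmbedding.integral_map g).symm

/-- Differentiation under the integral sign over a compact space. -/
lemma hasDerivAt_integral_compact {K F : Type*} [TopologicalSpace K] [CompactSpace K]
    [MeasurableSpace K] [OpensMeasurableSpace K] [SecondCountableTopology K]
    [NormedAddCommGroup F] [NormedSpace ℝ F]
    (ν : Measure K) [IsFiniteMeasure ν] (f f' : ℝ → K → F) (U : Set ℝ) (hU : IsOpen U)
    (hf : ∀ t ∈ U, Continuous (f t))
    (hf' : ContinuousOn (fun p : ℝ × K => f' p.1 p.2) (U ×ˢ univ))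
    (hd : ∀ t ∈ U, ∀ k, HasDerivAt (fun s => f s k) (f' t k) t) (t : ℝ) (ht : t ∈ U) :
    HasDerivAt (fun s => ∫ k, f s k ∂ν) (∫ k, f' t k ∂ν) t := by
  obtain ⟨ε, hε, hεU⟩ := Metric.nhds_basis_closedBall.mem_iff.mp (hU.mem_nhds ht)
  have hc : IsCompact (closedBall t ε ×ˢ (univ : Set K)) :=
    (isCompact_closedBall t ε).prod isCompact_univ
  obtain ⟨C, hC⟩ := hc.exists_bound_of_continuousOn (hf'.mono (prod_mono hεU subset_rfl))
  have hinteg : ∀ {g : K → F}, Continuous g → Integrable g ν := fun {g} hg =>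
    hg.integrable_of_hasCompactSupport (HasCompactSupport.of_compactSpace g)
  have hft' : Continuous (f' t) := by
    rw [← continuousOn_univ]
    exact hf'.comp (f := fun k => (t, k)) (by fun_prop) (fun k _ => ⟨ht, mem_univ _⟩)
  refine (hasDerivAt_integral_of_dominated_loc_of_deriv_le (s := closedBall t ε)
    (bound := fun _ => C) (closedBall_mem_nhds t hε) ?_ (hinteg (hf t ht))
    (hinteg hft').aestronglyMeasurable ?_ (integrable_const C) ?_).2
  · filter_upwards [hU.mem_nhds ht] with s hs using (hinteg (hf s hs)).aestronglyMeasurable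
  · exact ae_of_all _ fun k s hs => hC (s, k) ⟨hs, mem_univ _⟩
  · exact ae_of_all _ fun k s hs => hd s (hεU hs) k

/-! ### Rotations and the divergence theorem on spheres -/

/-- Rotation by the angle `t` in the coordinate plane spanned by `eᵢ` and `eⱼ`. -/
noncomputable def rotFun {n : ℕ} (i j : Fin n) (t : ℝ) (x : Eucl n) : Eucl n :=
  x + ((Real.cos t - 1) * x i - Real.sin t * x j) • basisV n i +
    ((Real.cos t - 1) * x j + Real.sin t * x i) • basisV n j

lemma inner_basisV {n : ℕ} (i : Fin n) (x : Eucl n) : ⟪x, basisV n i⟫_ℝ = x i := by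
  simp [basisV, EuclideanSpace.inner_single_right]

lemma norm_basisV {n : ℕ} (i : Fin n) : ‖basisV n i‖ = 1 := by
  simp [basisV]

lemma basisV_apply {n : ℕ} (i j : Fin n) : basisV n i j = if j = i then 1 else 0 := by
  simp [basisV]

lemma norm_rotFun {n : ℕ} {i j : Fin n} (hij : i ≠ j) (t : ℝ) (x : Eucl n) :
    ‖rotFun i j t x‖ = ‖x‖ := by
  have h : ‖rotFun i j t x‖ ^ 2 = ‖x‖ ^ 2 := by
    rw [← real_inner_self_eq_norm_sq, ← real_inner_self_eq_norm_sq]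
    have e1 : ∀ k, ⟪basisV n k, x⟫_ℝ = x k := fun k => by rw [real_inner_comm, inner_basisV]
    simp only [rotFun, inner_add_left, inner_add_right, inner_smul_left, inner_smul_right,
      inner_basisV, e1, basisV_apply, if_neg hij, if_neg hij.symm]
    simp
    have := Real.sin_sq_add_cos_sq t
    linear_combination (x i ^ 2 + x j ^ 2) * this
  exact (pow_left_inj₀ (norm_nonneg _) (norm_nonneg _) two_ne_zero).mp h

noncomputable def rotIso {n : ℕ} {i j : Fin n} (hij : i ≠ j) (t : ℝ) : Eucl n ≃ₗᵢ[ℝ] Eucl n :=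
  LinearIsometry.toLinearIsometryEquiv
    { toFun := rotFun i j t
      map_add' := fun x y => by simp only [rotFun, PiLp.add_apply]; module
      map_smul' := fun c x => by
        simp only [rotFun, PiLp.smul_apply, smul_eq_mul, RingHom.id_apply]; module
      norm_map' := fun x => norm_rotFun hij t x } rfl

@[simp] lemma rotIso_apply {n : ℕ} {i j : Fin n} (hij : i ≠ j) (t : ℝ) (x : Eucl n) :
    rotIso hij t x = rotFun i j t x := rfl

/-- The infinitesimal rotation `xᵢ eⱼ - xⱼ eᵢ` integrates every `C¹` function to zero over the
sphere: the derivative at `t = 0` of the constant function `t ↦ ∫ g (R_t ζ) dν`. -/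
lemma integral_rot_deriv {n : ℕ} {ν : Measure (uSphere n)} [IsFiniteMeasure ν] (hν : RotInv ν)
    (i j : Fin n) (Ω : Set (Eucl n)) (hΩ : IsOpen Ω) (hS : uSphere n ⊆ Ω) (g : Eucl n → ℂ)
    (hg : ContDiffOn ℝ 1 g Ω) :
    ∫ ζ : uSphere n, fderiv ℝ g ζ ((ζ : Eucl n) i • basisV n j - (ζ : Eucl n) j • basisV n i) ∂ν
      = 0 := by
  by_cases hij : i = j
  · subst hij; simp
  have hmem : ∀ (t : ℝ) (ζ : uSphere n), rotFun i j t ζ ∈ Ω := fun t ζ => hS (by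
    simp [uSphere, norm_rotFun hij, norm_uSphere])
  have hfd : ContinuousOn (fderiv ℝ g) Ω := hg.continuousOn_fderiv_of_isOpen hΩ le_rfl
  have hco : ∀ i : Fin n, Continuous fun x : Eucl n => x i := fun i => by fun_prop
  have hrc : Continuous fun p : ℝ × uSphere n => rotFun i j p.1 (p.2 : Eucl n) := by
    unfold rotFun
    fun_prop
  have key := hasDerivAt_integral_compact ν (fun t ζ => g (rotFun i j t ζ))
    (fun t (ζ : uSphere n) => fderiv ℝ g (rotFun i j t ζ)
      ((-Real.sin t * (ζ : Eucl n) i - Real.cos t * (ζ : Eucl n) j) • basisV n i +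
       (-Real.sin t * (ζ : Eucl n) j + Real.cos t * (ζ : Eucl n) i) • basisV n j))
    univ isOpen_univ ?_ ?_ ?_ 0 (mem_univ _)
  · have hconst : (fun t => ∫ ζ : uSphere n, g (rotFun i j t ζ) ∂ν) =
        fun _ => ∫ ζ : uSphere n, g ζ ∂ν := by
      ext t
      simpa using hν (rotIso hij t) g
    rw [hconst] at key
    rw [← key.unique (hasDerivAt_const _ _)]
    congr 1
    ext ζ
    congr 1
    · simp [rotFun]
    · simp; abel
  · intro t _
    have := hg.continuousOn.comp_continuous (f := fun ζ : uSphere n => rotFun i j t (ζ : Eucl n))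
      (by unfold rotFun; fun_prop) (hmem t)
    exact this
  · apply Continuous.continuousOn
    have h1 := hfd.comp_continuous hrc (fun p => hmem p.1 p.2)
    exact h1.clm_apply (by fun_prop)
  · intro t _ ζ
    have h1 : HasFDerivAt g (fderiv ℝ g (rotFun i j t ζ)) (rotFun i j t ζ) :=
      ((hg.differentiableOn one_ne_zero).differentiableAt (hΩ.mem_nhds (hmem t ζ))).hasFDerivAt
    refine h1.comp_hasDerivAt (x := t) (f := fun t => rotFun i j t (ζ : Eucl n)) ?_
    unfold rotFun
    have hs := Real.hasDerivAt_sin t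
    have hc := Real.hasDerivAt_cos t
    have a1 := ((((hc.sub_const 1).mul_const ((ζ : Eucl n) i)).sub
      (hs.mul_const ((ζ : Eucl n) j))).smul_const (basisV n i))
    have a2 := ((((hc.sub_const 1).mul_const ((ζ : Eucl n) j)).add
      (hs.mul_const ((ζ : Eucl n) i))).smul_const (basisV n j))
    exact (a1.const_add (ζ : Eucl n)).add a2

lemma sum_smul_basisV {n : ℕ} (x : Eucl n) : ∑ i, x i • basisV n i = x := by
  ext k
  simp [basisV_apply]

lemma sum_sq_eq {n : ℕ} (x : Eucl n) : ∑ i, x i ^ 2 = ‖x‖ ^ 2 := by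
  simp [EuclideanSpace.norm_sq_eq]

/-- For a divergence-free `C¹` covector field `V`, the flux density `x ↦ V x x` satisfies an
Euler equation in the mean over every sphere of radius `s`.  This sums the infinitesimal rotation
identities for the functions `x ↦ xᵢ Vⱼ(s x)`. -/
lemma integral_euler {n : ℕ} {ν : Measure (uSphere n)} [IsFiniteMeasure ν] (hν : RotInv ν)
    (ρ : ℝ) (V : Eucl n → (Eucl n →L[ℝ] ℂ)) (hV : ContDiffOn ℝ 1 V (ball 0 ρ))
    (hdiv : ∀ x ∈ ball (0 : Eucl n) ρ, ∑ j, fderiv ℝ V x (basisV n j) (basisV n j) = 0)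
    (s : ℝ) (hs : |s| < ρ) :
    ∫ ζ : uSphere n, (((n : ℂ) - 1) * V (s • (ζ : Eucl n)) ζ +
      s * fderiv ℝ V (s • (ζ : Eucl n)) ζ ζ) ∂ν = 0 := by
  set Ω : Set (Eucl n) := (fun x => s • x) ⁻¹' ball 0 ρ with hΩdef
  have hΩ : IsOpen Ω := isOpen_ball.preimage (by fun_prop)
  have hS : uSphere n ⊆ Ω := by
    intro x hx
    have : ‖x‖ = 1 := by simpa [uSphere] using hx
    simp [hΩdef, norm_smul, this, hs]
  have hVs : ContDiffOn ℝ 1 (fun x => V (s • x)) Ω :=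
    hV.comp (by fun_prop) (fun x hx => hx)
  have hco : ∀ i : Fin n, ContDiff ℝ 1 fun x : Eucl n => x i := fun i => by fun_prop
  let g : Fin n → Fin n → Eucl n → ℂ := fun i j x => x i • V (s • x) (basisV n j)
  have hg : ∀ i j, ContDiffOn ℝ 1 (g i j) Ω := fun i j =>
    (hco i).contDiffOn.smul (hVs.clm_apply contDiffOn_const)
  have hfd : ∀ i j (ζ : uSphere n) (w : Eucl n), fderiv ℝ (g i j) ζ w =
      w i • V (s • (ζ : Eucl n)) (basisV n j) +
        ((ζ : Eucl n) i * s) • fderiv ℝ V (s • (ζ : Eucl n)) w (basisV n j) := by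
    intro i j ζ w
    have hm : s • (ζ : Eucl n) ∈ ball (0 : Eucl n) ρ := hS ζ.2
    have h1 : HasFDerivAt V (fderiv ℝ V (s • (ζ : Eucl n))) (s • (ζ : Eucl n)) :=
      ((hV.differentiableOn one_ne_zero).differentiableAt (isOpen_ball.mem_nhds hm)).hasFDerivAt
    have h2 : HasFDerivAt (fun x : Eucl n => s • x) (s • ContinuousLinearMap.id ℝ (Eucl n)) (ζ : Eucl n) :=
      (hasFDerivAt_id _).const_smul s
    have h3 := (h1.comp (ζ : Eucl n) h2).clm_apply (hasFDerivAt_const (basisV n j) (ζ : Eucl n))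
    have h4 : HasFDerivAt (fun x : Eucl n => x i) (EuclideanSpace.proj i : Eucl n →L[ℝ] ℝ) (ζ : Eucl n) :=
      (EuclideanSpace.proj i : Eucl n →L[ℝ] ℝ).hasFDerivAt
    have h5 := h4.smul h3
    have h6 : HasFDerivAt (g i j) _ (ζ : Eucl n) := h5
    rw [h6.fderiv]
    simp
    ring
  have hinteg : ∀ i j, Integrable (fun ζ : uSphere n => fderiv ℝ (g i j) ζ
      ((ζ : Eucl n) i • basisV n j - (ζ : Eucl n) j • basisV n i)) ν := by
    intro i j
    apply integrable_sphere
    have h1 := ((hg i j).continuousOn_fderiv_of_isOpen hΩ le_rfl).comp_continuous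
      (f := fun ζ : uSphere n => (ζ : Eucl n)) continuous_subtype_val (fun ζ => hS ζ.2)
    exact h1.clm_apply (by fun_prop)
  have hsum : ∫ ζ : uSphere n, ∑ i, ∑ j, fderiv ℝ (g i j) ζ
      ((ζ : Eucl n) i • basisV n j - (ζ : Eucl n) j • basisV n i) ∂ν = 0 := by
    rw [integral_finsetSum _ (fun i _ => integrable_finsetSum _ (fun j _ => hinteg i j))]
    refine Finset.sum_eq_zero fun i _ => ?_
    rw [integral_finsetSum _ (fun j _ => hinteg i j)]
    exact Finset.sum_eq_zero fun j _ => integral_rot_deriv hν i j Ω hΩ hS _ (hg i j)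
  rw [← neg_eq_zero, ← hsum, ← integral_neg]
  congr 1
  ext ζ
  simp_rw [hfd]
  set z : Eucl n := (ζ : Eucl n) with hz
  have hz1 : ∑ i, (z i) ^ 2 = 1 := by rw [sum_sq_eq, hz, norm_uSphere]; norm_num
  have hm : s • z ∈ ball (0 : Eucl n) ρ := hS ζ.2
  set L := V (s • z) with hL
  set D := fderiv ℝ V (s • z) with hD
  have hd : ∑ j, D (basisV n j) (basisV n j) = 0 := hdiv _ hm
  have hLz : L z = ∑ j, (z j : ℂ) * L (basisV n j) := by
    conv_lhs => rw [← sum_smul_basisV z]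
    simp
  have hDz : D z z = ∑ i, ∑ j, (z i : ℂ) * (z j : ℂ) * D (basisV n i) (basisV n j) := by
    conv_lhs => rw [← sum_smul_basisV z]
    simp [Finset.mul_sum, mul_assoc]
    rw [Finset.sum_comm]
    exact Finset.sum_congr rfl fun i _ => Finset.sum_congr rfl fun j _ => by ring
  have hterm : ∀ i j, (z i • basisV n j - z j • basisV n i : Eucl n) i • L (basisV n j) +
      (z i * s) • D (z i • basisV n j - z j • basisV n i) (basisV n j) =
      (if i = j then (z j : ℂ) * L (basisV n j) else 0) - z j * L (basisV n j)
       + s * ((z i : ℂ) ^ 2 * D (basisV n j) (basisV n j))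
       - s * (z i * z j * D (basisV n i) (basisV n j)) := by
    intro i j
    by_cases h : i = j
    · subst h; simp; ring
    · simp [basisV_apply, h]; ring
  simp_rw [hterm]
  simp only [Finset.sum_add_distrib, Finset.sum_sub_distrib, ← Finset.mul_sum, ← Finset.sum_mul]
  rw [hd, ← hDz, ← hLz]
  simp
  rw [← hLz]
  ring

/-- Divergence theorem on the unit sphere for divergence-free fields. By `integral_euler` the
flux `s^{n-1} ∫ V(s ζ) ζ dν` has zero derivative in `s`, and it vanishes at `s = 0`. -/
lemma integral_flux {n : ℕ} (hn : 2 ≤ n) {ν : Measure (uSphere n)} [IsFiniteMeasure ν]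
    (hν : RotInv ν)
    (ρ : ℝ) (hρ : 1 < ρ) (V : Eucl n → (Eucl n →L[ℝ] ℂ)) (hV : ContDiffOn ℝ 1 V (ball 0 ρ))
    (hdiv : ∀ x ∈ ball (0 : Eucl n) ρ, ∑ j, fderiv ℝ V x (basisV n j) (basisV n j) = 0) :
    ∫ ζ : uSphere n, V ζ ζ ∂ν = 0 := by
  have hmem : ∀ s ∈ Ioo (-ρ) ρ, ∀ ζ : uSphere n, s • (ζ : Eucl n) ∈ ball (0 : Eucl n) ρ := by
    intro s hs ζ
    simpa [norm_smul, norm_uSphere] using abs_lt.mpr hs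
  have hcV : ContinuousOn (fun p : ℝ × uSphere n => V (p.1 • (p.2 : Eucl n)))
      (Ioo (-ρ) ρ ×ˢ univ) :=
    hV.continuousOn.comp (by fun_prop) (fun p hp => hmem p.1 hp.1 p.2)
  have hcD : ContinuousOn (fun p : ℝ × uSphere n => fderiv ℝ V (p.1 • (p.2 : Eucl n)))
      (Ioo (-ρ) ρ ×ˢ univ) :=
    (hV.continuousOn_fderiv_of_isOpen isOpen_ball le_rfl).comp (by fun_prop)
      (fun p hp => hmem p.1 hp.1 p.2)
  have hcz : ContinuousOn (fun p : ℝ × uSphere n => (p.2 : Eucl n)) (Ioo (-ρ) ρ ×ˢ univ) :=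
    Continuous.continuousOn (by fun_prop)
  have hpow : ∀ s : ℝ, HasDerivAt (fun t : ℝ => (t : ℂ) ^ (n - 1))
      (((n : ℂ) - 1) * (s : ℂ) ^ (n - 2)) s := by
    intro s
    have := (Complex.ofRealCLM.hasDerivAt (x := s)).fun_pow (n - 1)
    have e : ((n - 1 : ℕ) : ℂ) = (n : ℂ) - 1 := by
      rw [Nat.cast_sub (by omega)]; simp
    have e2 : n - 1 - 1 = n - 2 := by omega
    rw [e, e2] at this
    simpa only [Complex.ofRealCLM_apply, Complex.ofReal_one, mul_one] using this
  have key : ∀ s ∈ Ioo (-ρ) ρ, HasDerivAt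
      (fun t : ℝ => ∫ ζ : uSphere n, (t : ℂ) ^ (n - 1) * V (t • (ζ : Eucl n)) ζ ∂ν) 0 s := by
    intro s hs
    have h := hasDerivAt_integral_compact ν
      (fun t (ζ : uSphere n) => (t : ℂ) ^ (n - 1) * V (t • (ζ : Eucl n)) ζ)
      (fun s (ζ : uSphere n) => ((n : ℂ) - 1) * (s : ℂ) ^ (n - 2) * V (s • (ζ : Eucl n)) ζ +
        (s : ℂ) ^ (n - 1) * fderiv ℝ V (s • (ζ : Eucl n)) ζ ζ) (Ioo (-ρ) ρ) isOpen_Ioo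
      ?_ ?_ ?_ s hs
    · have e : ∀ ζ : uSphere n, ((n : ℂ) - 1) * (s : ℂ) ^ (n - 2) * V (s • (ζ : Eucl n)) ζ +
        (s : ℂ) ^ (n - 1) * fderiv ℝ V (s • (ζ : Eucl n)) ζ ζ = (s : ℂ) ^ (n - 2) *
          (((n : ℂ) - 1) * V (s • (ζ : Eucl n)) ζ +
            s * fderiv ℝ V (s • (ζ : Eucl n)) ζ ζ) := by
        intro ζ
        have : n - 1 = (n - 2) + 1 := by omega
        rw [this, pow_succ]; ring
      rw [integral_congr_ae (ae_of_all _ e), integral_const_mul,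
        integral_euler hν ρ V hV hdiv s (abs_lt.mpr hs), mul_zero] at h
      exact h
    · intro t ht
      have h1 : Continuous fun ζ : uSphere n => V (t • (ζ : Eucl n)) :=
        hV.continuousOn.comp_continuous (by fun_prop) (hmem t ht)
      exact continuous_const.mul (h1.clm_apply continuous_subtype_val)
    · refine ContinuousOn.add (ContinuousOn.mul ?_ (hcV.clm_apply hcz))
        (ContinuousOn.mul ?_ ((hcD.clm_apply hcz).clm_apply hcz))
      · exact Continuous.continuousOn (by fun_prop)
      · exact Continuous.continuousOn (by fun_prop)
    · intro t ht ζ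
      have h1 : HasFDerivAt V (fderiv ℝ V (t • (ζ : Eucl n))) (t • (ζ : Eucl n)) :=
        ((hV.differentiableOn one_ne_zero).differentiableAt
          (isOpen_ball.mem_nhds (hmem t ht ζ))).hasFDerivAt
      have h2 : HasDerivAt (fun t : ℝ => t • (ζ : Eucl n)) (ζ : Eucl n) t := by
        simpa using (hasDerivAt_id t).smul_const (ζ : Eucl n)
      have h2' : HasDerivAt (fun t : ℝ => V (t • (ζ : Eucl n)))
        (fderiv ℝ V (t • (ζ : Eucl n)) ζ) t := h1.comp_hasDerivAt t h2
      have h3 : HasDerivAt (fun t : ℝ => V (t • (ζ : Eucl n)) ζ)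
          (fderiv ℝ V (t • (ζ : Eucl n)) ζ ζ) t := by
        have := h2'.clm_apply (hasDerivAt_const t (ζ : Eucl n))
        rwa [ContinuousLinearMap.map_zero, add_zero] at this
      exact (hpow t).fun_mul h3
  have hconst : ∀ x ∈ Ioo (-ρ) ρ, ∀ y ∈ Ioo (-ρ) ρ, _ = _ := fun x hx y hy =>
    isOpen_Ioo.is_const_of_deriv_eq_zero isPreconnected_Ioo
      (fun s hs => (key s hs).differentiableAt.differentiableWithinAt)
      (fun s hs => (key s hs).deriv) hx hy
  have h01 := hconst 1 ⟨by linarith, hρ⟩ 0 ⟨by linarith, by linarith⟩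
  have hn1 : n - 1 ≠ 0 := by omega
  simpa [hn1] using h01

/-! ### Conformal changes of variable for harmonic functions -/

lemma HarmOn.contDiffAt {n : ℕ} {f : Eucl n → ℂ} {U : Set (Eucl n)} (hf : HarmOn f U)
    (hU : IsOpen U) {x : Eucl n} (hx : x ∈ U) : ContDiffAt ℝ 2 f x :=
  hf.1.contDiffAt (hU.mem_nhds hx)

lemma hasFDerivAt_of_C2 {n : ℕ} {f : Eucl n → ℂ} {x : Eucl n} (hf : ContDiffAt ℝ 2 f x) :
    HasFDerivAt f (fderiv ℝ f x) x :=
  (hf.differentiableAt two_ne_zero).hasFDerivAt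

lemma hasFDerivAt_fderiv_of_C2 {n : ℕ} {f : Eucl n → ℂ} {x : Eucl n} (hf : ContDiffAt ℝ 2 f x) :
    HasFDerivAt (fderiv ℝ f) (fderiv ℝ (fderiv ℝ f) x) x :=
  ((hf.fderiv_right (m := 1) (by norm_num)).differentiableAt one_ne_zero).hasFDerivAt

lemma lap_eq {n : ℕ} (f : Eucl n → ℂ) (x : Eucl n) :
    lap f x = ∑ i, fderiv ℝ (fderiv ℝ f) x (basisV n i) (basisV n i) := by
  simp [lap, iteratedFDeriv_two_apply]

/-- The Laplacian may be computed in any orthonormal frame `A eᵢ`. -/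
lemma lap_eq_iso {n : ℕ} (f : Eucl n → ℂ) (x : Eucl n) (A : Eucl n ≃ₗᵢ[ℝ] Eucl n) :
    lap f x = ∑ i, fderiv ℝ (fderiv ℝ f) x (A (basisV n i)) (A (basisV n i)) := by
  have h1 := congrFun (InnerProductSpace.laplacian_eq_iteratedFDeriv_orthonormalBasis f
    (EuclideanSpace.basisFun (Fin n) ℝ)) x
  have h2 := congrFun (InnerProductSpace.laplacian_eq_iteratedFDeriv_orthonormalBasis f
    ((EuclideanSpace.basisFun (Fin n) ℝ).map A)) x
  have h3 := h1.symm.trans h2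
  simpa [lap, basisV, iteratedFDeriv_two_apply] using h3

/-- The second derivative along `e`, computed along the line `t ↦ x + t e`. -/
lemma fderiv_fderiv_eq_of_line {n : ℕ} {F : Eucl n → ℂ} {x e : Eucl n} (hF : ContDiffAt ℝ 2 F x)
    {d : ℝ → ℂ} {d' : ℂ} (h1 : ∀ᶠ t : ℝ in 𝓝 0, HasDerivAt (fun t : ℝ => F (x + t • e)) (d t) t)
    (h2 : HasDerivAt d d' 0) : fderiv ℝ (fderiv ℝ F) x e e = d' := by
  have hl : ∀ t : ℝ, HasDerivAt (fun t : ℝ => x + t • e) e t := fun t => by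
    simpa using ((hasDerivAt_id t).smul_const e).const_add x
  have hev : ∀ᶠ y in 𝓝 x, ContDiffAt ℝ 2 F y := hF.eventually (by simp)
  have hct : Tendsto (fun t : ℝ => x + t • e) (𝓝 0) (𝓝 x) := by
    have := (hl 0).continuousAt.tendsto
    simpa using this
  have heq : d =ᶠ[𝓝 0] fun t => fderiv ℝ F (x + t • e) e := by
    filter_upwards [h1, hct.eventually hev] with t ht hy
    exact ht.unique ((hasFDerivAt_of_C2 hy).comp_hasDerivAt t (hl t))
  have h3 : HasFDerivAt (fderiv ℝ F) (fderiv ℝ (fderiv ℝ F) x) (x + (0 : ℝ) • e) := by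
    simpa using hasFDerivAt_fderiv_of_C2 hF
  have h4 : HasDerivAt (fun t : ℝ => fderiv ℝ F (x + t • e)) (fderiv ℝ (fderiv ℝ F) x e) 0 :=
    h3.comp_hasDerivAt 0 (hl 0)
  have h5 : HasDerivAt (fun t : ℝ => fderiv ℝ F (x + t • e) e)
      (fderiv ℝ (fderiv ℝ F) x e e) 0 := by
    have := h4.clm_apply (hasDerivAt_const (0 : ℝ) e)
    rwa [ContinuousLinearMap.map_zero, add_zero] at this
  exact (h5.congr_of_eventuallyEq heq).unique h2

/-- Harmonicity is preserved by similarities; `l = 0` is allowed. -/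
lemma harmOn_similarity {n : ℕ} {f : Eucl n → ℂ} {U W : Set (Eucl n)} (hU : IsOpen U)
    (hW : IsOpen W) (hf : HarmOn f U) (b : Eucl n) (l : ℝ) (A : Eucl n ≃ₗᵢ[ℝ] Eucl n)
    (hm : ∀ x ∈ W, b + l • A x ∈ U) : HarmOn (fun x => f (b + l • A x)) W := by
  have hA : ContDiff ℝ 2 A := A.contDiff
  have hc : ContDiffOn ℝ 2 (fun x => f (b + l • A x)) W :=
    hf.1.comp (contDiff_const.add (hA.const_smul l)).contDiffOn hm
  refine ⟨hc, fun x hx => ?_⟩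
  have hy := hf.contDiffAt hU (hm x hx)
  have key : ∀ e, fderiv ℝ (fderiv ℝ (fun x => f (b + l • A x))) x e e =
      (l ^ 2 : ℝ) • fderiv ℝ (fderiv ℝ f) (b + l • A x) (A e) (A e) := by
    intro e
    have hl : ∀ t : ℝ, HasDerivAt (fun t : ℝ => b + l • A (x + t • e)) (l • A e) t := fun t => by
      have := (((hasDerivAt_id t).smul_const (l • A e)).const_add (b + l • A x))
      rw [one_smul] at this
      refine this.congr_of_eventuallyEq (Eventually.of_forall fun s => ?_)
      show b + l • A (x + s • e) = b + l • A x + s • l • A e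
      rw [map_add, map_smul, smul_add, smul_comm l s, add_assoc]
    have hev : ∀ᶠ y in 𝓝 (b + l • A x), ContDiffAt ℝ 2 f y := hy.eventually (by simp)
    have hct : Tendsto (fun t : ℝ => b + l • A (x + t • e)) (𝓝 0) (𝓝 (b + l • A x)) := by
      simpa using (hl 0).continuousAt.tendsto
    refine fderiv_fderiv_eq_of_line (hc.contDiffAt (hW.mem_nhds hx))
      (d := fun t => fderiv ℝ f (b + l • A (x + t • e)) (l • A e)) ?_ ?_
    · filter_upwards [hct.eventually hev] with t ht
      exact (hasFDerivAt_of_C2 ht).comp_hasDerivAt t (hl t)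
    · have h3 : HasFDerivAt (fderiv ℝ f) (fderiv ℝ (fderiv ℝ f) (b + l • A x))
          (b + l • A (x + (0 : ℝ) • e)) := by
        simpa using hasFDerivAt_fderiv_of_C2 hy
      have h4 : HasDerivAt (fun t : ℝ => fderiv ℝ f (b + l • A (x + t • e)))
          (fderiv ℝ (fderiv ℝ f) (b + l • A x) (l • A e)) 0 := h3.comp_hasDerivAt 0 (hl 0)
      have h5 := h4.clm_apply (hasDerivAt_const (0 : ℝ) (l • A e))
      rw [ContinuousLinearMap.map_zero, add_zero] at h5
      refine h5.congr_deriv ?_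
      rw [map_smul, map_smul, smul_apply, smul_smul, pow_two]
  rw [lap_eq]
  simp_rw [key]
  rw [← Finset.smul_sum, ← lap_eq_iso, hf.2 _ (hm x hx), smul_zero]

/-- The map `x ↦ b + l A (x - a) / |x - a|²`: an inversion centred at `a` followed by a
similarity. -/
noncomputable def invMap {n : ℕ} (a b : Eucl n) (l : ℝ) (A : Eucl n ≃ₗᵢ[ℝ] Eucl n) (x : Eucl n) :
    Eucl n :=
  b + (l * (‖x - a‖ ^ 2)⁻¹) • A (x - a)

lemma contDiffAt_normsq_rpow {n : ℕ} (a x : Eucl n) (hx : x ≠ a) (α : ℝ) :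
    ContDiffAt ℝ 2 (fun x : Eucl n => (‖x - a‖ ^ 2) ^ α) x := by
  have h1 : ContDiffAt ℝ 2 (fun x : Eucl n => ‖x - a‖ ^ 2) x :=
    (contDiffAt_id.sub contDiffAt_const).norm_sq ℝ
  refine h1.rpow_const_of_ne ?_
  have : 0 < ‖x - a‖ := norm_pos_iff.mpr (sub_ne_zero.mpr hx)
  positivity

lemma contDiffAt_invMap {n : ℕ} (a b x : Eucl n) (hx : x ≠ a) (l : ℝ)
    (A : Eucl n ≃ₗᵢ[ℝ] Eucl n) : ContDiffAt ℝ 2 (invMap a b l A) x := by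
  have h1 : ContDiffAt ℝ 2 (fun x : Eucl n => ‖x - a‖ ^ 2) x :=
    (contDiffAt_id.sub contDiffAt_const).norm_sq ℝ
  have : 0 < ‖x - a‖ := norm_pos_iff.mpr (sub_ne_zero.mpr hx)
  have h2 := h1.inv (by positivity)
  have hA : ContDiff ℝ 2 A := A.contDiff
  exact contDiffAt_const.add ((contDiffAt_const.mul h2).smul
    (hA.contDiffAt.comp x (contDiffAt_id.sub contDiffAt_const)))

lemma sum_inner_smul_basisV {n : ℕ} (v : Eucl n) : ∑ i, ⟪v, basisV n i⟫_ℝ • basisV n i = v := by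
  simp_rw [inner_basisV]; exact sum_smul_basisV v

lemma sum_inner_sq {n : ℕ} (v : Eucl n) : ∑ i, ⟪v, basisV n i⟫_ℝ ^ 2 = ‖v‖ ^ 2 := by
  simp_rw [inner_basisV]; exact sum_sq_eq v

/-- Derivative of `invMap` along a line. -/
lemma invMap_line {n : ℕ} (a b x e : Eucl n) (he : ‖e‖ = 1) (l : ℝ) (A : Eucl n ≃ₗᵢ[ℝ] Eucl n)
    (t : ℝ) (ht : x + t • e ≠ a) :
    HasDerivAt (fun t : ℝ => ‖x + t • e - a‖ ^ 2) (2 * (⟪x - a, e⟫_ℝ + t)) t ∧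
    HasDerivAt (fun t : ℝ => invMap a b l A (x + t • e))
      ((l * (-(2 * (⟪x - a, e⟫_ℝ + t)) * (‖x + t • e - a‖ ^ 2)⁻¹ ^ 2)) • (A (x - a) + t • A e) +
        (l * (‖x + t • e - a‖ ^ 2)⁻¹) • A e) t := by
  have hq : ∀ s : ℝ, ‖x + s • e - a‖ ^ 2 = ‖x - a‖ ^ 2 + 2 * s * ⟪x - a, e⟫_ℝ + s ^ 2 := by
    intro s
    rw [show x + s • e - a = (x - a) + s • e by abel, norm_add_sq_real, norm_smul, he,
      inner_smul_right]
    simp; ring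
  have h1 : HasDerivAt (fun t : ℝ => ‖x + t • e - a‖ ^ 2) (2 * (⟪x - a, e⟫_ℝ + t)) t := by
    simp_rw [hq]
    have := ((((hasDerivAt_id t).const_mul 2).mul_const ⟪x - a, e⟫_ℝ).const_add
      (‖x - a‖ ^ 2)).add ((hasDerivAt_id t).pow 2)
    refine this.congr_deriv ?_
    simp; ring
  refine ⟨h1, ?_⟩
  have hq0 : ‖x + t • e - a‖ ^ 2 ≠ 0 := by
    have : 0 < ‖x + t • e - a‖ := norm_pos_iff.mpr (sub_ne_zero.mpr ht)
    positivity
  have h2 : HasDerivAt (fun t : ℝ => A (x - a) + t • A e) (A e) t := by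
    simpa using ((hasDerivAt_id t).smul_const (A e)).const_add (A (x - a))
  have h3 := (((h1.fun_inv hq0).const_mul l).fun_smul h2).const_add b
  have e1 : (fun t : ℝ => invMap a b l A (x + t • e)) = fun t : ℝ =>
      b + (l * (‖x + t • e - a‖ ^ 2)⁻¹) • (A (x - a) + t • A e) := by
    ext1 s
    rw [invMap, show x + s • e - a = (x - a) + s • e by abel]
    simp
  rw [e1]
  refine h3.congr_deriv ?_
  rw [add_comm, div_eq_mul_inv, inv_pow]

/-- Kelvin transform: `|x - a|^{2-n} f(φ x)` is harmonic for `φ` an inversion followed by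
a similarity. The second derivatives are computed along lines through `x`. Summed over the
coordinate directions, the second-order terms give the Laplacian of `f`, since `φ'(x)` is conformal;
the terms of order zero and one cancel because of the exponent `2 - n`. -/
lemma harmOn_kelvin {n : ℕ} {f : Eucl n → ℂ} {U W : Set (Eucl n)} (hU : IsOpen U)
    (hW : IsOpen W) (hf : HarmOn f U) (a b : Eucl n) (l : ℝ) (A : Eucl n ≃ₗᵢ[ℝ] Eucl n)
    (ha : a ∉ W) (hm : ∀ x ∈ W, invMap a b l A x ∈ U) :
    HarmOn (fun x => ((‖x - a‖ ^ 2) ^ ((2 - (n : ℝ)) / 2) : ℝ) • f (invMap a b l A x)) W := by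
  have hne : ∀ x ∈ W, x ≠ a := fun x hx h => ha (h ▸ hx)
  set α : ℝ := (2 - (n : ℝ)) / 2 with hα
  have hc : ContDiffOn ℝ 2 (fun x => ((‖x - a‖ ^ 2) ^ α : ℝ) • f (invMap a b l A x)) W :=
    fun x hx => ((contDiffAt_normsq_rpow a x (hne x hx) α).smul
      ((hf.contDiffAt hU (hm x hx)).comp x
        (contDiffAt_invMap a b x (hne x hx) l A))).contDiffWithinAt
  refine ⟨hc, fun x hx => ?_⟩
  have hy := hf.contDiffAt hU (hm x hx)
  set y := invMap a b l A x with hydef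
  set q : ℝ := ‖x - a‖ ^ 2 with hqdef
  have hq : 0 < q := by
    have : 0 < ‖x - a‖ := norm_pos_iff.mpr (sub_ne_zero.mpr (hne x hx))
    positivity
  set v := A (x - a) with hv
  -- `y' i` and `y'' i` are the first two derivatives of the inversion in the direction `basisV n i`
  let p : Fin n → ℝ := fun i => ⟪x - a, basisV n i⟫_ℝ
  let y' : Fin n → Eucl n := fun i =>
    (l * (-(2 * p i) * q⁻¹ ^ 2)) • v + (l * q⁻¹) • A (basisV n i)
  let y'' : Fin n → Eucl n := fun i =>
    (l * (8 * p i ^ 2 * q⁻¹ ^ 3 - 2 * q⁻¹ ^ 2)) • v - (l * (4 * p i * q⁻¹ ^ 2)) • A (basisV n i)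
  have key : ∀ i, fderiv ℝ (fderiv ℝ
        (fun x => ((‖x - a‖ ^ 2) ^ α : ℝ) • f (invMap a b l A x))) x (basisV n i) (basisV n i) =
      (α * (α - 1) * q ^ (α - 2) * (4 * p i ^ 2) + 2 * α * q ^ (α - 1)) • f y +
      (2 * (α * q ^ (α - 1) * (2 * p i))) • fderiv ℝ f y (y' i) +
      q ^ α • (fderiv ℝ (fderiv ℝ f) y (y' i) (y' i) + fderiv ℝ f y (y'' i)) := by
    intro i
    set e := basisV n i with he
    have he1 : ‖e‖ = 1 := norm_basisV i
    have hlc : Tendsto (fun t : ℝ => x + t • e) (𝓝 0) (𝓝 x) := by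
      have : Continuous fun t : ℝ => x + t • e := by fun_prop
      simpa using this.tendsto 0
    have hx0 : x + (0 : ℝ) • e ≠ a := by simpa using hne x hx
    obtain ⟨hq0, hy0⟩ := invMap_line a b x e he1 l A 0 hx0
    have hct : Tendsto (fun t : ℝ => invMap a b l A (x + t • e)) (𝓝 0) (𝓝 y) := by
      simpa using hy0.continuousAt.tendsto
    have hev : ∀ᶠ z in 𝓝 y, ContDiffAt ℝ 2 f z := hy.eventually (by simp)
    let Y' : ℝ → Eucl n := fun t =>
      (l * (-(2 * (p i + t)) * (‖x + t • e - a‖ ^ 2)⁻¹ ^ 2)) • (v + t • A e) +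
        (l * (‖x + t • e - a‖ ^ 2)⁻¹) • A e
    have hrp : ∀ (β : ℝ) (t : ℝ), x + t • e ≠ a →
        HasDerivAt (fun t : ℝ => (‖x + t • e - a‖ ^ 2) ^ β)
          (2 * (p i + t) * β * (‖x + t • e - a‖ ^ 2) ^ (β - 1)) t := by
      intro β t ht
      refine (invMap_line a b x e he1 l A t ht).1.rpow_const (Or.inl ?_)
      have : 0 < ‖x + t • e - a‖ := norm_pos_iff.mpr (sub_ne_zero.mpr ht)
      positivity
    refine fderiv_fderiv_eq_of_line (hc.contDiffAt (hW.mem_nhds hx))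
      (d := fun t => (‖x + t • e - a‖ ^ 2) ^ α • fderiv ℝ f (invMap a b l A (x + t • e)) (Y' t) +
        (2 * (p i + t) * α * (‖x + t • e - a‖ ^ 2) ^ (α - 1)) • f (invMap a b l A (x + t • e)))
      ?_ ?_
    · filter_upwards [hct.eventually hev, hlc.eventually (eventually_ne_nhds (hne x hx))]
        with t ht hta
      have h1 : HasDerivAt (fun t : ℝ => f (invMap a b l A (x + t • e))) _ t :=
        (hasFDerivAt_of_C2 ht).comp_hasDerivAt t (invMap_line a b x e he1 l A t hta).2
      exact (hrp α t hta).fun_smul h1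
    · have hx0e : x + (0 : ℝ) • e = x := by simp
      have hp : ⟪x - a, e⟫_ℝ = p i := rfl
      have hq0' : HasDerivAt (fun t : ℝ => ‖x + t • e - a‖ ^ 2) (2 * p i) 0 :=
        hq0.congr_deriv (by rw [hp, add_zero])
      have hy0' : HasDerivAt (fun t : ℝ => invMap a b l A (x + t • e)) (y' i) 0 :=
        hy0.congr_deriv (by rw [hp, hx0e, add_zero, zero_smul, add_zero])
      have hfy : HasFDerivAt f (fderiv ℝ f y) (invMap a b l A (x + (0 : ℝ) • e)) := by
        rw [hx0e]; exact hasFDerivAt_of_C2 hy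
      have hffy : HasFDerivAt (fderiv ℝ f) (fderiv ℝ (fderiv ℝ f) y)
          (invMap a b l A (x + (0 : ℝ) • e)) := by
        rw [hx0e]; exact hasFDerivAt_fderiv_of_C2 hy
      have h1 : HasDerivAt (fun t : ℝ => f (invMap a b l A (x + t • e))) (fderiv ℝ f y (y' i)) 0 :=
        hfy.comp_hasDerivAt 0 hy0'
      have h2 : HasDerivAt (fun t : ℝ => fderiv ℝ f (invMap a b l A (x + t • e)))
          (fderiv ℝ (fderiv ℝ f) y (y' i)) 0 := hffy.comp_hasDerivAt 0 hy0'
      have hqne : ‖x + (0 : ℝ) • e - a‖ ^ 2 ≠ 0 := by rw [hx0e]; exact hq.ne'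
      have hqi : HasDerivAt (fun t : ℝ => (‖x + t • e - a‖ ^ 2)⁻¹) (-(2 * p i) * q⁻¹ ^ 2) 0 :=
        (hq0'.fun_inv hqne).congr_deriv (by rw [hx0e, div_eq_mul_inv, inv_pow])
      have hlin : HasDerivAt (fun t : ℝ => v + t • A e) (A e) 0 := by
        have := ((hasDerivAt_id (0 : ℝ)).smul_const (A e)).const_add v
        rwa [one_smul] at this
      have hpt : HasDerivAt (fun t : ℝ => 2 * (p i + t)) 2 0 := by
        simpa using ((hasDerivAt_id (0 : ℝ)).const_add (p i)).const_mul 2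
      have hY : HasDerivAt Y' (y'' i) 0 := by
        refine ((((hpt.fun_neg.fun_mul (hqi.fun_pow 2)).const_mul l).fun_smul hlin).add
          ((hqi.const_mul l).smul_const (A e))).congr_deriv ?_
        rw [hx0e]
        simp only [add_zero, zero_smul, y'']
        push_cast
        module
      have hY0 : Y' 0 = y' i := by
        simp only [Y', y', add_zero, zero_smul]
        rfl
      have h3 := (hrp α 0 hx0).fun_smul (h2.clm_apply hY)
      have h4 := ((hpt.mul_const α).fun_mul (hrp (α - 1) 0 hx0)).fun_smul h1
      refine (h3.add h4).congr_deriv ?_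
      rw [hY0, hx0e, add_zero, ← hydef, ← hqdef, show α - 1 - 1 = α - 2 by ring]
      module
  have hd1 : ∀ i, fderiv ℝ f y (y' i) = (l * (-(2 * p i) * q⁻¹ ^ 2)) • fderiv ℝ f y v +
      (l * q⁻¹) • fderiv ℝ f y (A (basisV n i)) := by
    intro i; simp only [y', map_add, map_smul]
  have hd2 : ∀ i, fderiv ℝ f y (y'' i) =
      (l * (8 * p i ^ 2 * q⁻¹ ^ 3 - 2 * q⁻¹ ^ 2)) • fderiv ℝ f y v -
      (l * (4 * p i * q⁻¹ ^ 2)) • fderiv ℝ f y (A (basisV n i)) := by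
    intro i; simp only [y'', map_sub, map_smul]
  have hp2 : ∑ i, p i ^ 2 = q := sum_inner_sq _
  have hpA : ∑ i, p i • fderiv ℝ f y (A (basisV n i)) = fderiv ℝ f y v := by
    simp_rw [← map_smul, ← map_sum]
    rw [sum_inner_smul_basisV]
  -- `y' i` is a multiple of the image of `basisV n i` under an isometry.
  have hdd : ∑ i, fderiv ℝ (fderiv ℝ f) y (y' i) (y' i) = 0 := by
    let R : Eucl n ≃ₗᵢ[ℝ] Eucl n := (ℝ ∙ (x - a)).reflection.trans A
    have hR : ∀ i, y' i = (-(l * q⁻¹)) • R (basisV n i) := by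
      intro i
      have : R (basisV n i) = (2 * (p i * q⁻¹)) • v - A (basisV n i) := by
        simp only [R, LinearIsometryEquiv.trans_apply, Submodule.reflection_singleton_apply]
        simp only [map_sub, hv, p, hqdef]
        simp [div_eq_mul_inv, two_smul, two_mul, add_smul]
      rw [this]
      simp only [y']
      module
    simp_rw [hR, map_smul, smul_apply, smul_smul]
    rw [← Finset.smul_sum, ← lap_eq_iso, hf.2 _ (hm x hx), smul_zero]
  have hqa : q ^ (α - 1) = q ^ α * q⁻¹ := by
    rw [Real.rpow_sub_one hq.ne', div_eq_mul_inv]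
  have hqa2 : q ^ (α - 2) = q ^ α * q⁻¹ ^ 2 := by
    rw [show α - 2 = α - 1 - 1 by ring, Real.rpow_sub_one hq.ne', hqa, div_eq_mul_inv]; ring
  rw [lap_eq]
  simp_rw [key, hd1, hd2]
  have hterm : ∀ i, (α * (α - 1) * q ^ (α - 2) * (4 * p i ^ 2) + 2 * α * q ^ (α - 1)) • f y +
      (2 * (α * q ^ (α - 1) * (2 * p i))) • ((l * (-(2 * p i) * q⁻¹ ^ 2)) • fderiv ℝ f y v +
      (l * q⁻¹) • fderiv ℝ f y (A (basisV n i))) +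
      q ^ α • (fderiv ℝ (fderiv ℝ f) y (y' i) (y' i) +
        ((l * (8 * p i ^ 2 * q⁻¹ ^ 3 - 2 * q⁻¹ ^ 2)) • fderiv ℝ f y v -
      (l * (4 * p i * q⁻¹ ^ 2)) • fderiv ℝ f y (A (basisV n i)))) =
      (4 * α * (α - 1) * q ^ (α - 2)) • p i ^ 2 • f y + (2 * α * q ^ (α - 1)) • f y
      + ((8 * q ^ α * l * q⁻¹ ^ 3 - 8 * α * q ^ (α - 1) * l * q⁻¹ ^ 2)) • p i ^ 2 • fderiv ℝ f y v
      - (2 * q ^ α * l * q⁻¹ ^ 2) • fderiv ℝ f y v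
      + (4 * α * q ^ (α - 1) * l * q⁻¹ - 4 * q ^ α * l * q⁻¹ ^ 2) •
        p i • fderiv ℝ f y (A (basisV n i))
      + q ^ α • fderiv ℝ (fderiv ℝ f) y (y' i) (y' i) := by
    intro i; module
  simp_rw [hterm]
  simp only [Finset.sum_add_distrib, Finset.sum_sub_distrib, ← Finset.smul_sum, ← Finset.sum_smul]
  rw [hdd, hpA, hp2, hqa, hqa2]
  simp only [Finset.sum_const, Finset.card_univ, Fintype.card_fin, ← Nat.cast_smul_eq_nsmul ℝ,
    smul_smul, ← add_smul, smul_zero, add_zero]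
  have hn : (n : ℝ) = 2 - 2 * α := by rw [hα]; ring
  have hqq : q⁻¹ * q = 1 := inv_mul_cancel₀ hq.ne'
  rw [hn]
  -- the coefficients of `f y` and of its derivative along `v` vanish for `n = 2 - 2 α`
  have c1 : 4 * α * (α - 1) * (q ^ α * q⁻¹ ^ 2) * q + (2 - 2 * α) * (2 * α * (q ^ α * q⁻¹)) = 0 := by
    linear_combination (4 * α * (α - 1) * q ^ α * q⁻¹) * hqq
  have c2 : (8 * q ^ α * l * q⁻¹ ^ 3 - 8 * α * (q ^ α * q⁻¹) * l * q⁻¹ ^ 2) * q -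
      (2 - 2 * α) * (2 * q ^ α * l * q⁻¹ ^ 2) +
      (4 * α * (q ^ α * q⁻¹) * l * q⁻¹ - 4 * q ^ α * l * q⁻¹ ^ 2) = 0 := by
    linear_combination (8 * q ^ α * l * q⁻¹ ^ 2 - 8 * α * q ^ α * q⁻¹ ^ 2 * l) * hqq
  have d1 := congrArg (fun k : ℝ => k • f y) c1
  have d2 := congrArg (fun k : ℝ => k • fderiv ℝ f y v) c2
  simp only [zero_smul] at d1 d2
  rw [← add_zero (0 : ℂ)]
  nth_rewrite 1 [← d1]
  rw [← d2]
  module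

/-! ### Green's identity and the mean value property -/

lemma harmOn_congr {n : ℕ} {f g : Eucl n → ℂ} {W : Set (Eucl n)} (hW : IsOpen W)
    (hf : HarmOn f W) (h : EqOn g f W) : HarmOn g W := by
  refine ⟨hf.1.congr h, fun x hx => ?_⟩
  have he : g =ᶠ[𝓝 x] f := h.eventuallyEq_of_mem (hW.mem_nhds hx)
  rw [lap_eq, he.fderiv.fderiv_eq, ← lap_eq, hf.2 x hx]

lemma harmOn_affine {n : ℕ} (c : ℂ) (T : Eucl n →L[ℝ] ℂ) (W : Set (Eucl n)) :
    HarmOn (fun x => c + T x) W := by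
  refine ⟨(contDiff_const.add T.contDiff).contDiffOn, fun x _ => ?_⟩
  have h : fderiv ℝ (fun x => c + T x) = fun _ => T := by
    funext y
    rw [fderiv_const_add, T.fderiv]
  rw [lap_eq, h]
  simp

lemma harmOn_const_mul {n : ℕ} {f : Eucl n → ℂ} {W : Set (Eucl n)} (hW : IsOpen W)
    (hf : HarmOn f W) (c : ℂ) : HarmOn (fun x => c * f x) W := by
  refine ⟨contDiffOn_const.mul hf.1, fun x hx => ?_⟩
  have h2 := hf.contDiffAt hW hx
  have h : fderiv ℝ (fun x => c * f x) =ᶠ[𝓝 x] fun y => c • fderiv ℝ f y := by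
    filter_upwards [h2.eventually (by simp)] with y hy
    exact fderiv_const_mul (hasFDerivAt_of_C2 hy).differentiableAt c
  have h3 : fderiv ℝ (fun y => c • fderiv ℝ f y) x = c • fderiv ℝ (fderiv ℝ f) x :=
    fderiv_const_smul (hasFDerivAt_fderiv_of_C2 h2).differentiableAt c
  rw [lap_eq, h.fderiv_eq, h3]
  have := hf.2 x hx
  rw [lap_eq] at this
  simp only [smul_apply, ← Finset.smul_sum, this, smul_zero]

/-- Green's second identity on the unit sphere: the field `u ∇f - f ∇u` is divergence free. -/
lemma integral_green {n : ℕ} (hn : 2 ≤ n) {ν : Measure (uSphere n)} [IsProbabilityMeasure ν]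
    (hν : RotInv ν) {ρ : ℝ} (hρ : 1 < ρ) {f u : Eucl n → ℂ} (hf : HarmOn f (ball 0 ρ))
    (hu : HarmOn u (ball 0 ρ)) :
    ∫ ζ : uSphere n, (u ζ * fderiv ℝ f ζ ζ - f ζ * fderiv ℝ u ζ ζ) ∂ν = 0 := by
  have hf' : ContDiffOn ℝ 1 (fderiv ℝ f) (ball 0 ρ) :=
    hf.1.fderiv_of_isOpen isOpen_ball (by norm_num)
  have hu' : ContDiffOn ℝ 1 (fderiv ℝ u) (ball 0 ρ) :=
    hu.1.fderiv_of_isOpen isOpen_ball (by norm_num)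
  refine integral_flux hn hν ρ hρ (fun x => u x • fderiv ℝ f x - f x • fderiv ℝ u x)
    (((hu.1.of_le one_le_two).smul hf').sub ((hf.1.of_le one_le_two).smul hu')) ?_
  intro x hx
  have f2 := hf.contDiffAt isOpen_ball hx
  have u2 := hu.contDiffAt isOpen_ball hx
  have h := (((hasFDerivAt_of_C2 u2).smul (hasFDerivAt_fderiv_of_C2 f2)).sub
    ((hasFDerivAt_of_C2 f2).smul (hasFDerivAt_fderiv_of_C2 u2))).fderiv
  have hterm : ∀ j, fderiv ℝ (fun x => u x • fderiv ℝ f x - f x • fderiv ℝ u x) x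
      (basisV n j) (basisV n j) =
      u x * fderiv ℝ (fderiv ℝ f) x (basisV n j) (basisV n j) -
      f x * fderiv ℝ (fderiv ℝ u) x (basisV n j) (basisV n j) := by
    intro j
    erw [h]
    simp
    ring
  simp_rw [hterm]
  have h1 := hf.2 x hx
  have h2 := hu.2 x hx
  rw [lap_eq] at h1 h2
  rw [Finset.sum_sub_distrib, ← Finset.mul_sum, ← Finset.mul_sum, h1, h2]
  simp

lemma mem_uBall {n : ℕ} {x : Eucl n} : x ∈ uBall n ↔ ‖x‖ < 1 := by
  simp [uBall]

lemma norm_smul_sphere {n : ℕ} (t : ℝ) (ζ : uSphere n) : ‖t • (ζ : Eucl n)‖ = |t| := by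
  rw [norm_smul, norm_uSphere, mul_one, Real.norm_eq_abs]

lemma isOpen_uBall {n : ℕ} : IsOpen (uBall n) := isOpen_ball

lemma harmOn_scale {n : ℕ} {f : Eucl n → ℂ} (hf : HarmOn f (uBall n)) {t ρ : ℝ} (ht : 0 < t)
    (hρ : t * ρ ≤ 1) : HarmOn (fun x => f (t • x)) (ball 0 ρ) := by
  have h := harmOn_similarity (W := ball 0 ρ) isOpen_uBall isOpen_ball hf 0 t
    (LinearIsometryEquiv.refl ℝ _) ?_
  · simpa using h
  · intro x hx
    rw [mem_ball_zero_iff] at hx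
    rw [mem_uBall]
    simp only [zero_add, LinearIsometryEquiv.coe_refl, id, norm_smul, Real.norm_eq_abs,
      abs_of_pos ht]
    nlinarith

lemma fderiv_scale {n : ℕ} {f : Eucl n → ℂ} (hf : HarmOn f (uBall n)) {t : ℝ} (ht : 0 ≤ t)
    (ht1 : t < 1) (ζ : uSphere n) :
    fderiv ℝ (fun x => f (t • x)) ζ ζ = t * fderiv ℝ f (t • (ζ : Eucl n)) ζ := by
  have hm : t • (ζ : Eucl n) ∈ uBall n := by
    rw [mem_uBall, norm_smul_sphere, abs_of_nonneg ht]; exact ht1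
  have h1 := hasFDerivAt_of_C2 (hf.contDiffAt isOpen_uBall hm)
  have h2 : HasFDerivAt (fun x : Eucl n => t • x) (t • ContinuousLinearMap.id ℝ (Eucl n))
      (ζ : Eucl n) := (hasFDerivAt_id _).const_smul t
  have h3 : HasFDerivAt (fun x => f (t • x)) _ (ζ : Eucl n) := h1.comp (ζ : Eucl n) h2
  rw [h3.fderiv]
  simp

/-- Derivative of `f` along a ray. -/
lemma hasDerivAt_ray {n : ℕ} {f : Eucl n → ℂ} (hf : HarmOn f (uBall n)) {t : ℝ}
    (ht : |t| < 1) (ζ : uSphere n) :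
    HasDerivAt (fun t : ℝ => f (t • (ζ : Eucl n))) (fderiv ℝ f (t • (ζ : Eucl n)) ζ) t := by
  have hm : t • (ζ : Eucl n) ∈ uBall n := by
    rw [mem_uBall, norm_smul_sphere]; exact ht
  have h2 : HasDerivAt (fun t : ℝ => t • (ζ : Eucl n)) ((ζ : Eucl n)) t := by
    simpa using (hasDerivAt_id t).smul_const (ζ : Eucl n)
  exact (hasFDerivAt_of_C2 (hf.contDiffAt isOpen_uBall hm)).comp_hasDerivAt t h2

lemma continuous_ray {n : ℕ} {f : Eucl n → ℂ} (hf : ContinuousOn f (uBall n)) {t : ℝ}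
    (ht : |t| < 1) : Continuous fun ζ : uSphere n => f (t • (ζ : Eucl n)) :=
  hf.comp_continuous (by fun_prop) fun ζ => by rw [mem_uBall, norm_smul_sphere]; exact ht

lemma continuousOn_fderiv_ray {n : ℕ} {f : Eucl n → ℂ} (hf : HarmOn f (uBall n)) :
    ContinuousOn (fun p : ℝ × uSphere n => fderiv ℝ f (p.1 • (p.2 : Eucl n)) p.2)
      (Ioo (-1) 1 ×ˢ univ) := by
  have hf' : ContinuousOn (fderiv ℝ f) (uBall n) :=
    (hf.1.fderiv_of_isOpen (m := 1) isOpen_uBall (by norm_num)).continuousOn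
  have hc : Continuous fun p : ℝ × uSphere n => p.1 • (p.2 : Eucl n) := by fun_prop
  have hc2 : Continuous fun p : ℝ × uSphere n => (p.2 : Eucl n) := by fun_prop
  refine (hf'.comp hc.continuousOn ?_).clm_apply hc2.continuousOn
  rintro ⟨t, ζ⟩ ⟨ht, -⟩
  show t • (ζ : Eucl n) ∈ uBall n
  rw [mem_uBall, norm_smul_sphere, abs_lt]; exact ht

/-- Mean value property: by Green's identity with `u = 1`, the spherical mean has zero
derivative in the radius. -/
lemma integral_ray {n : ℕ} (hn : 2 ≤ n) {ν : Measure (uSphere n)} [IsProbabilityMeasure ν]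
    (hν : RotInv ν) {f : Eucl n → ℂ} (hf : HarmOn f (uBall n)) {r : ℝ} (hr : 0 ≤ r)
    (hr1 : r < 1) : ∫ ζ : uSphere n, f (r • (ζ : Eucl n)) ∂ν = f 0 := by
  have hd : ∀ t ∈ Ioo (-1 : ℝ) 1, HasDerivAt (fun t : ℝ => ∫ ζ : uSphere n, f (t • (ζ : Eucl n)) ∂ν)
      (∫ ζ : uSphere n, fderiv ℝ f (t • (ζ : Eucl n)) ζ ∂ν) t := fun t ht =>
    hasDerivAt_integral_compact ν (fun t ζ => f (t • (ζ : Eucl n)))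
      (fun t ζ => fderiv ℝ f (t • (ζ : Eucl n)) ζ) (Ioo (-1) 1) isOpen_Ioo
      (fun t ht => continuous_ray hf.1.continuousOn (abs_lt.mpr ht)) (continuousOn_fderiv_ray hf)
      (fun t ht ζ => hasDerivAt_ray hf (abs_lt.mpr ht) ζ) t ht
  have hz : ∀ t ∈ Ioo (0 : ℝ) 1, ∫ ζ : uSphere n, fderiv ℝ f (t • (ζ : Eucl n)) ζ ∂ν = 0 := by
    intro t ht
    have hρ : 1 < t⁻¹ := (one_lt_inv₀ ht.1).mpr ht.2
    have h := integral_green hn hν hρ (harmOn_scale hf ht.1 (mul_inv_cancel₀ ht.1.ne').le)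
      (harmOn_affine 1 0 _)
    simp only [fderiv_scale hf ht.1.le ht.2] at h
    simp only [zero_apply, add_zero, fderiv_fun_const, one_mul, Pi.zero_apply, mul_zero,
      sub_zero] at h
    rw [integral_const_mul] at h
    exact (mul_eq_zero.mp h).resolve_left (by exact_mod_cast ht.1.ne')
  have hc := constant_of_has_deriv_right_zero (a := 0) (b := r)
    (f := fun t : ℝ => ∫ ζ : uSphere n, f (t • (ζ : Eucl n)) ∂ν)
    (fun t ht => (hd t ⟨by linarith [ht.1], by linarith [ht.2]⟩).continuousAt.continuousWithinAt)
    ?_ r ⟨hr, le_rfl⟩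
  · rw [hc]; simp
  · intro t ht
    rcases ht.1.eq_or_lt with h0 | h0
    · have h00 := hd 0 (by norm_num)
      -- At the centre the derivative vanishes as `ζ ↦ f'(0) ζ` is odd.
      have hodd := hν (LinearIsometryEquiv.neg ℝ) (fun x => fderiv ℝ f 0 x)
      simp only [LinearIsometryEquiv.coe_neg, map_neg, integral_neg] at hodd
      have : ∫ ζ : uSphere n, fderiv ℝ f 0 (ζ : Eucl n) ∂ν = 0 := by
        have h2 := congrArg (fun z => z + ∫ ζ : uSphere n, fderiv ℝ f 0 (ζ : Eucl n) ∂ν) hodd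
        simp only [neg_add_cancel] at h2
        rw [← two_mul] at h2
        simpa using h2.symm
      simp only [zero_smul] at h00
      rw [this] at h00
      rw [← h0]
      simpa using h00.hasDerivWithinAt
    · have := hd t ⟨by linarith, by linarith [ht.2]⟩
      rw [hz t ⟨h0, by linarith [ht.2]⟩] at this
      exact this.hasDerivWithinAt

/-- For `f`, `u` harmonic in the ball, `∫ f(s ζ) u(t ζ)` only depends on the product `s t`:
the derivative of `τ ↦ ∫ f((k/τ) ζ) u(τ ζ)` is a multiple of the integral in Green's identity. -/
lemma integral_ray_mul {n : ℕ} (hn : 2 ≤ n) {ν : Measure (uSphere n)} [IsProbabilityMeasure ν]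
    (hν : RotInv ν) {f u : Eucl n → ℂ} (hf : HarmOn f (uBall n)) (hu : HarmOn u (uBall n))
    {k s t : ℝ} (hk : 0 < k) (hs : k < s) (hst : s ≤ t) (ht : t < 1) :
    ∫ ζ : uSphere n, f ((k / t) • (ζ : Eucl n)) * u (t • (ζ : Eucl n)) ∂ν =
    ∫ ζ : uSphere n, f ((k / s) • (ζ : Eucl n)) * u (s • (ζ : Eucl n)) ∂ν := by
  let F' : ℝ → uSphere n → ℂ := fun τ ζ =>
    (-(k / τ ^ 2) : ℝ) * fderiv ℝ f ((k / τ) • (ζ : Eucl n)) ζ * u (τ • (ζ : Eucl n)) +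
      f ((k / τ) • (ζ : Eucl n)) * fderiv ℝ u (τ • (ζ : Eucl n)) ζ
  have hτ : ∀ τ ∈ Ioo k 1, 0 < τ ∧ |k / τ| < 1 ∧ |τ| < 1 := by
    intro τ h
    have h0 : 0 < τ := hk.trans h.1
    refine ⟨h0, ?_, by rw [abs_of_pos h0]; exact h.2⟩
    rw [abs_of_pos (by positivity), div_lt_one h0]; exact h.1
  have hcu : ContinuousOn (fun p : ℝ × uSphere n => u (p.1 • (p.2 : Eucl n)))
      (Ioo k 1 ×ˢ univ) := by
    have hc : Continuous fun p : ℝ × uSphere n => p.1 • (p.2 : Eucl n) := by fun_prop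
    refine hu.1.continuousOn.comp hc.continuousOn ?_
    rintro ⟨τ, ζ⟩ ⟨h, -⟩
    show τ • (ζ : Eucl n) ∈ uBall n
    rw [mem_uBall, norm_smul_sphere]; exact (hτ τ h).2.2
  have hdiv : ContinuousOn (fun p : ℝ × uSphere n => k / p.1) (Ioo k 1 ×ˢ univ) :=
    continuousOn_const.div continuous_fst.continuousOn
      fun p hp => (hτ p.1 hp.1).1.ne'
  have hcf : ContinuousOn (fun p : ℝ × uSphere n => f ((k / p.1) • (p.2 : Eucl n)))
      (Ioo k 1 ×ˢ univ) := by
    have hc2 : Continuous fun p : ℝ × uSphere n => (p.2 : Eucl n) := by fun_prop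
    refine hf.1.continuousOn.comp (hdiv.smul hc2.continuousOn) ?_
    rintro ⟨τ, ζ⟩ ⟨h, -⟩
    show (k / τ) • (ζ : Eucl n) ∈ uBall n
    rw [mem_uBall, norm_smul_sphere]; exact (hτ τ h).2.1
  have hcf' : ContinuousOn (fun p : ℝ × uSphere n =>
      fderiv ℝ f ((k / p.1) • (p.2 : Eucl n)) p.2) (Ioo k 1 ×ˢ univ) := by
    refine (continuousOn_fderiv_ray hf).comp (hdiv.prodMk continuous_snd.continuousOn) ?_
    rintro ⟨τ, ζ⟩ ⟨h, -⟩
    exact ⟨abs_lt.mp (hτ τ h).2.1, mem_univ _⟩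
  have hcu' : ContinuousOn (fun p : ℝ × uSphere n => fderiv ℝ u (p.1 • (p.2 : Eucl n)) p.2)
      (Ioo k 1 ×ˢ univ) := by
    refine (continuousOn_fderiv_ray hu).mono ?_
    rintro ⟨τ, ζ⟩ ⟨h, -⟩
    exact ⟨abs_lt.mp (hτ τ h).2.2, mem_univ _⟩
  have hck : ContinuousOn (fun p : ℝ × uSphere n => (((-(k / p.1 ^ 2) : ℝ)) : ℂ))
      (Ioo k 1 ×ˢ univ) := by
    refine Complex.continuous_ofReal.comp_continuousOn
      (continuousOn_const.div (continuous_fst.pow 2).continuousOn ?_).neg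
    exact fun p hp => pow_ne_zero 2 (hτ p.1 hp.1).1.ne'
  have hd : ∀ τ ∈ Ioo k 1, HasDerivAt
      (fun τ : ℝ => ∫ ζ : uSphere n, f ((k / τ) • (ζ : Eucl n)) * u (τ • (ζ : Eucl n)) ∂ν)
      (∫ ζ : uSphere n, F' τ ζ ∂ν) τ := fun τ h =>
    hasDerivAt_integral_compact ν
      (fun τ ζ => f ((k / τ) • (ζ : Eucl n)) * u (τ • (ζ : Eucl n))) F' (Ioo k 1) isOpen_Ioo
      (fun τ h => (continuous_ray hf.1.continuousOn (hτ τ h).2.1).mul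
        (continuous_ray hu.1.continuousOn (hτ τ h).2.2))
      (((hck.mul hcf').mul hcu).add (hcf.mul hcu'))
      (fun τ h ζ => by
        have h1 : HasDerivAt (fun τ : ℝ => k / τ) (-(k / τ ^ 2)) τ := by
          have := (hasDerivAt_inv (hτ τ h).1.ne').const_mul k
          simpa [div_eq_mul_inv] using this
        have h2 := (hasDerivAt_ray hf (hτ τ h).2.1 ζ).scomp τ h1
        refine (h2.mul (hasDerivAt_ray hu (hτ τ h).2.2 ζ)).congr_deriv ?_
        simp only [F', Complex.real_smul, Function.comp]) τ h
  have hz : ∀ τ ∈ Ioo k 1, ∫ ζ : uSphere n, F' τ ζ ∂ν = 0 := by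
    intro τ h
    obtain ⟨h0, h1, h2⟩ := hτ τ h
    have hkt : 0 < k / τ := by positivity
    rw [abs_of_pos hkt] at h1
    rw [abs_of_pos h0] at h2
    have hρ : 1 < min (k / τ)⁻¹ τ⁻¹ :=
      lt_min ((one_lt_inv₀ hkt).mpr h1) ((one_lt_inv₀ h0).mpr h2)
    have hg := integral_green hn hν hρ
      (harmOn_scale hf hkt ((mul_le_mul_of_nonneg_left (min_le_left _ _) hkt.le).trans
        (mul_inv_cancel₀ hkt.ne').le))
      (harmOn_scale hu h0 ((mul_le_mul_of_nonneg_left (min_le_right _ _) h0.le).trans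
        (mul_inv_cancel₀ h0.ne').le))
    simp only [fderiv_scale hf hkt.le h1, fderiv_scale hu h0.le h2] at hg
    have : ∀ ζ : uSphere n, F' τ ζ = (-(1 / τ) : ℝ) *
        (u (τ • (ζ : Eucl n)) * ((k / τ : ℝ) * fderiv ℝ f ((k / τ) • (ζ : Eucl n)) ζ) -
          f ((k / τ) • (ζ : Eucl n)) * (τ * fderiv ℝ u (τ • (ζ : Eucl n)) ζ)) := by
      intro ζ
      have : (τ : ℂ) ≠ 0 := by exact_mod_cast h0.ne'
      simp only [F']
      push_cast
      field_simp
      ring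
    simp_rw [this]
    rw [integral_const_mul, hg, mul_zero]
  refine constant_of_has_deriv_right_zero (a := s) (b := t)
    (f := fun τ : ℝ => ∫ ζ : uSphere n, f ((k / τ) • (ζ : Eucl n)) * u (τ • (ζ : Eucl n)) ∂ν)
    (fun τ h => (hd τ ⟨by linarith [h.1], by linarith [h.2]⟩).continuousAt.continuousWithinAt)
    (fun τ h => ?_) t ⟨hst, le_rfl⟩
  have := hd τ ⟨by linarith [h.1], by linarith [h.2]⟩
  rw [hz τ ⟨by linarith [h.1], by linarith [h.2]⟩] at this
  exact this.hasDerivWithinAt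

/-! ### The Poisson kernel -/

/-- The Poisson kernel is the Kelvin transform, centred at `η`, of an affine function. -/
lemma harmOn_poissonK {n : ℕ} (η : Eucl n) (hη : ‖η‖ = 1) :
    HarmOn (fun x => (poissonK n x η : ℂ)) (uBall n) := by
  have hne : η ∉ uBall n := by rw [mem_uBall, hη]; exact lt_irrefl _
  let T : Eucl n →L[ℝ] ℂ := (-2 : ℝ) • (Complex.ofRealCLM.comp (innerSL ℝ η))
  have hk := harmOn_kelvin isOpen_univ isOpen_uBall (harmOn_affine (-1) T univ) η 0 1
    (LinearIsometryEquiv.refl ℝ _) hne (fun x _ => mem_univ _)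
  refine harmOn_congr isOpen_uBall hk fun x hx => ?_
  have hv : x - η ≠ 0 := sub_ne_zero.mpr fun h => hne (h ▸ hx)
  have hv0 : 0 < ‖x - η‖ := norm_pos_iff.mpr hv
  have hpow : (‖x - η‖ ^ 2) ^ ((2 - (n : ℝ)) / 2) = ‖x - η‖ ^ 2 / ‖x - η‖ ^ n := by
    rw [← Real.rpow_natCast ‖x - η‖ 2, ← Real.rpow_mul hv0.le,
      show ((2 : ℕ) : ℝ) * ((2 - (n : ℝ)) / 2) = ((2 : ℕ) : ℝ) - n by push_cast; ring,
      Real.rpow_sub hv0, Real.rpow_natCast, Real.rpow_natCast]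
  have hx2 : 1 - ‖x‖ ^ 2 = -(‖x - η‖ ^ 2) - 2 * ⟪η, x - η⟫_ℝ := by
    have := norm_sub_sq_real x η
    rw [inner_sub_right, real_inner_self_eq_norm_sq, this, hη, real_inner_comm]
    ring
  have hT : T (invMap η 0 1 (LinearIsometryEquiv.refl ℝ _) x) =
      ((-2 * (‖x - η‖ ^ 2)⁻¹ * ⟪η, x - η⟫_ℝ : ℝ) : ℂ) := by
    simp [T, invMap]
    ring
  show (poissonK n x η : ℂ) = _ • (-1 + T _)
  rw [hT, hpow, poissonK, hx2, Complex.real_smul]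
  have hv1 : (‖x - η‖ : ℂ) ≠ 0 := by exact_mod_cast hv0.ne'
  push_cast
  field_simp
  ring

lemma poissonK_nonneg {n : ℕ} {x : Eucl n} (hx : x ∈ uBall n) (η : Eucl n) :
    0 ≤ poissonK n x η := by
  rw [mem_uBall] at hx
  have : 0 ≤ ‖x‖ := norm_nonneg x
  exact div_nonneg (by nlinarith) (by positivity)

lemma poissonK_zero {n : ℕ} {η : Eucl n} (hη : ‖η‖ = 1) : poissonK n 0 η = 1 := by
  simp [poissonK, hη]

lemma norm_smul_sub_comm {n : ℕ} (r : ℝ) {ζ η : Eucl n} (hζ : ‖ζ‖ = 1) (hη : ‖η‖ = 1) :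
    ‖r • ζ - η‖ = ‖r • η - ζ‖ := by
  rw [← sq_eq_sq₀ (norm_nonneg _) (norm_nonneg _), norm_sub_sq_real, norm_sub_sq_real,
    norm_smul, norm_smul, hζ, hη, inner_smul_left, inner_smul_left, real_inner_comm]

/-- The Poisson kernel is symmetric in the two points of the sphere. -/
lemma poissonK_comm {n : ℕ} (r : ℝ) {ζ η : Eucl n} (hζ : ‖ζ‖ = 1) (hη : ‖η‖ = 1) :
    poissonK n (r • ζ) η = poissonK n (r • η) ζ := by
  rw [poissonK, poissonK, norm_smul_sub_comm r hζ hη, norm_smul, norm_smul, hζ, hη]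

lemma poissonK_le {n : ℕ} {y ζ : Eucl n} (hy : y ∈ uBall n) (hζ : ‖ζ‖ = 1) :
    poissonK n y ζ ≤ (1 + ‖y‖) * (1 - ‖y‖) ^ (1 - (n : ℝ)) := by
  rw [mem_uBall] at hy
  have h0 : 0 < 1 - ‖y‖ := by linarith
  have h1 : 1 - ‖y‖ ≤ ‖y - ζ‖ := by
    have := norm_sub_norm_le ζ y
    rw [hζ, norm_sub_rev] at this
    exact this
  have h2 : (1 - ‖y‖) ^ n ≤ ‖y - ζ‖ ^ n := by gcongr
  rw [Real.rpow_sub h0, Real.rpow_one, Real.rpow_natCast, poissonK]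
  have h3 : 0 ≤ 1 - ‖y‖ ^ 2 := by nlinarith [norm_nonneg y]
  calc (1 - ‖y‖ ^ 2) / ‖y - ζ‖ ^ n ≤ (1 - ‖y‖ ^ 2) / (1 - ‖y‖) ^ n := by gcongr
    _ = _ := by ring

/-- The integral is taken in the variable `r ζ`, in which the kernel is harmonic. -/
lemma integral_poissonK {n : ℕ} (hn : 2 ≤ n) {ν : Measure (uSphere n)} [IsProbabilityMeasure ν]
    (hν : RotInv ν) {r : ℝ} (hr : 0 ≤ r) (hr1 : r < 1) {η : Eucl n} (hη : ‖η‖ = 1) :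
    ∫ ζ : uSphere n, poissonK n (r • (ζ : Eucl n)) η ∂ν = 1 := by
  have h := integral_ray hn hν (harmOn_poissonK η hη) hr hr1
  rw [integral_complex_ofReal, poissonK_zero hη] at h
  exact_mod_cast h

/-- Poisson's formula for the dilate `x ↦ f (R x)` on the ray through `η`. The integral
`∫ f((k/τ)ζ) P(τζ, η)` does not depend on `τ`, and concentrates at `η` as `τ → 1`. -/
lemma poisson_ray {n : ℕ} (hn : 2 ≤ n) {ν : Measure (uSphere n)} [IsProbabilityMeasure ν]
    (hν : RotInv ν) {f : Eucl n → ℂ} (hf : HarmOn f (uBall n)) {R r : ℝ} (hR : 0 < R)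
    (hR1 : R < 1) (hr : 0 < r) (hr1 : r < 1) {η : Eucl n} (hη : ‖η‖ = 1) :
    ∫ ζ : uSphere n, f (R • (ζ : Eucl n)) * (poissonK n (r • (ζ : Eucl n)) η : ℂ) ∂ν =
      f ((R * r) • η) := by
  set k := R * r with hk
  have hk0 : 0 < k := mul_pos hR hr
  have hkr : k < r := by nlinarith
  have hu := harmOn_poissonK η hη
  set J := ∫ ζ : uSphere n, f (R • (ζ : Eucl n)) * (poissonK n (r • (ζ : Eucl n)) η : ℂ) ∂ν
  have hJ : ∀ t, r ≤ t → t < 1 →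
      ∫ ζ : uSphere n, f ((k / t) • (ζ : Eucl n)) * (poissonK n (t • (ζ : Eucl n)) η : ℂ) ∂ν
        = J := by
    intro t h1 h2
    rw [integral_ray_mul hn hν hf hu hk0 hkr h1 h2, hk, mul_div_cancel_right₀ _ hr.ne']
  have hfc : ContinuousOn f (uBall n) := hf.1.continuousOn
  have hkη : k • η ∈ uBall n := by
    rw [mem_uBall, norm_smul, hη, mul_one, Real.norm_eq_abs, abs_of_pos hk0]; linarith
  -- a bound for `f` on a ball containing all the points `(k / t) ζ`
  obtain ⟨M, hM⟩ := (isCompact_closedBall (0 : Eucl n) R).exists_bound_of_continuousOn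
    (hfc.mono fun x hx => by
      rw [mem_closedBall_zero_iff] at hx
      rw [mem_uBall]; linarith)
  have hM0 : 0 ≤ M := (norm_nonneg _).trans (hM 0 (by simp [hR.le]))
  have key : ∀ ε > 0, ‖J - f (k • η)‖ ≤ ε := by
    intro ε hε
    obtain ⟨δ, hδ, hδf⟩ := Metric.continuousAt_iff.mp
      (hfc.continuousAt (isOpen_uBall.mem_nhds hkη)) ε hε
    have hbound : ∀ᶠ t in 𝓝[<] (1 : ℝ),
        ‖J - f (k • η)‖ ≤ ε + 2 * M * ((1 - t ^ 2) / (δ / 4) ^ n) := by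
      have hlim : Tendsto (fun t : ℝ => k / t) (𝓝[<] 1) (𝓝 k) := by
        have : ContinuousAt (fun t : ℝ => k / t) 1 :=
          continuousAt_const.div continuousAt_id one_ne_zero
        have h2 := this.tendsto
        rw [div_one] at h2
        exact h2.mono_left nhdsWithin_le_nhds
      have e1 : ∀ᶠ t in 𝓝[<] (1 : ℝ), |k / t - k| < δ / 2 := by
        have := hlim.eventually (Metric.ball_mem_nhds k (half_pos hδ))
        simpa [Real.dist_eq] using this
      have e2 : ∀ᶠ t in 𝓝[<] (1 : ℝ), max r (1 - δ / 4) < t :=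
        nhdsWithin_le_nhds (eventually_gt_nhds (max_lt hr1 (by linarith)))
      filter_upwards [e1, e2, self_mem_nhdsWithin] with t ht1 ht2 ht3
      have ht3 : t < 1 := ht3
      have htr : r < t := (le_max_left _ _).trans_lt ht2
      have htδ : 1 - δ / 4 < t := (le_max_right _ _).trans_lt ht2
      have ht0 : 0 < t := hr.trans htr
      have hkt0 : 0 < k / t := by positivity
      have hktR : k / t ≤ R := by
        rw [div_le_iff₀ ht0, hk]; nlinarith
      have habs : |k / t| < 1 := by rw [abs_of_pos hkt0]; linarith
      have habt : |t| < 1 := by rw [abs_of_pos ht0]; exact ht3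
      have hmem : ∀ ζ : uSphere n, t • (ζ : Eucl n) ∈ uBall n := fun ζ => by
        rw [mem_uBall, norm_smul_sphere]; exact habt
      have cf : Continuous fun ζ : uSphere n => f ((k / t) • (ζ : Eucl n)) :=
        continuous_ray hfc habs
      have cp : Continuous fun ζ : uSphere n => (poissonK n (t • (ζ : Eucl n)) η : ℂ) :=
        continuous_ray hu.1.continuousOn habt
      have cpr : Continuous fun ζ : uSphere n => poissonK n (t • (ζ : Eucl n)) η := by
        have := Complex.continuous_re.comp cp
        simpa [Function.comp_def] using this
      have hinteg := integral_poissonK hn hν ht0.le ht3 hη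
      have hsub : J - f (k • η) = ∫ ζ : uSphere n, (f ((k / t) • (ζ : Eucl n)) - f (k • η)) *
          (poissonK n (t • (ζ : Eucl n)) η : ℂ) ∂ν := by
        simp_rw [sub_mul]
        rw [integral_sub (integrable_sphere (cf.fun_mul cp))
          (integrable_sphere (continuous_const.fun_mul cp)), hJ t htr.le ht3, integral_const_mul,
          integral_complex_ofReal, hinteg]
        simp
      rw [hsub]
      set C := 2 * M * ((1 - t ^ 2) / (δ / 4) ^ n) with hC
      have hC0 : 0 ≤ C := by
        have : 0 ≤ 1 - t ^ 2 := by nlinarith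
        positivity
      have hpt : ∀ ζ : uSphere n, ‖(f ((k / t) • (ζ : Eucl n)) - f (k • η)) *
          (poissonK n (t • (ζ : Eucl n)) η : ℂ)‖ ≤ ε * poissonK n (t • (ζ : Eucl n)) η + C := by
        intro ζ
        have hP := poissonK_nonneg (hmem ζ) η
        rw [norm_mul, Complex.norm_real, Real.norm_eq_abs, abs_of_nonneg hP]
        -- near `η` continuity of `f` is used; away from `η` the kernel tends to zero uniformly
        by_cases hζ : ‖(ζ : Eucl n) - η‖ < δ / 2
        · have hd : dist ((k / t) • (ζ : Eucl n)) (k • η) < δ := by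
            rw [dist_eq_norm, show (k / t) • (ζ : Eucl n) - k • η =
              (k / t - k) • (ζ : Eucl n) + k • ((ζ : Eucl n) - η) by module]
            refine (norm_add_le _ _).trans_lt ?_
            rw [norm_smul_sphere, norm_smul, Real.norm_eq_abs, abs_of_pos hk0]
            nlinarith [norm_nonneg ((ζ : Eucl n) - η)]
          have := hδf hd
          rw [dist_eq_norm] at this
          nlinarith
        · push Not at hζ
          have h1 : ‖f ((k / t) • (ζ : Eucl n)) - f (k • η)‖ ≤ 2 * M := by
            refine (norm_sub_le _ _).trans ?_
            have a1 := hM ((k / t) • (ζ : Eucl n)) (by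
              rw [mem_closedBall_zero_iff, norm_smul_sphere, abs_of_pos hkt0]; exact hktR)
            have a2 := hM (k • η) (by
              rw [mem_closedBall_zero_iff, norm_smul, hη, Real.norm_eq_abs, abs_of_pos hk0]
              nlinarith)
            linarith
          have h2 : δ / 4 ≤ ‖t • (ζ : Eucl n) - η‖ := by
            have a1 : ‖(ζ : Eucl n) - η‖ ≤ ‖t • (ζ : Eucl n) - η‖ + (1 - t) := by
              have : (ζ : Eucl n) - η = (t • (ζ : Eucl n) - η) + (1 - t) • (ζ : Eucl n) := by
                module
              rw [this]
              refine (norm_add_le _ _).trans ?_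
              rw [norm_smul_sphere, abs_of_pos (by linarith : 0 < 1 - t)]
            linarith
          have h3 : poissonK n (t • (ζ : Eucl n)) η ≤ (1 - t ^ 2) / (δ / 4) ^ n := by
            rw [poissonK, norm_smul_sphere, sq_abs]
            have : 0 ≤ 1 - t ^ 2 := by nlinarith
            gcongr
          calc _ ≤ 2 * M * ((1 - t ^ 2) / (δ / 4) ^ n) :=
                mul_le_mul h1 h3 hP (by positivity)
            _ ≤ _ := by rw [← hC]; nlinarith
      calc _ ≤ ∫ ζ : uSphere n, (ε * poissonK n (t • (ζ : Eucl n)) η + C) ∂ν :=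
            norm_integral_le_of_norm_le
              (integrable_sphere ((continuous_const.mul cpr).add continuous_const))
              (Eventually.of_forall hpt)
        _ = ε + C := by
            rw [integral_add (integrable_sphere (continuous_const.fun_mul cpr))
              (integrable_const _), integral_const_mul, hinteg]
            simp
    have hl : Tendsto (fun t : ℝ => ε + 2 * M * ((1 - t ^ 2) / (δ / 4) ^ n)) (𝓝[<] 1) (𝓝 ε) := by
      have hc : Continuous fun t : ℝ => ε + 2 * M * ((1 - t ^ 2) / (δ / 4) ^ n) := by fun_prop
      have := (hc.tendsto 1).mono_left (nhdsWithin_le_nhds (s := Iio 1))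
      simpa using this
    exact ge_of_tendsto hl hbound
  have : ‖J - f (k • η)‖ ≤ 0 := le_of_forall_pos_le_add fun ε hε => by simpa using key ε hε
  exact sub_eq_zero.mp (norm_le_zero_iff.mp this)

/-- Poisson's formula for the dilate `x ↦ f (R x)`, which is harmonic across the sphere. -/
lemma poisson_formula {n : ℕ} (hn : 2 ≤ n) {ν : Measure (uSphere n)} [IsProbabilityMeasure ν]
    (hν : RotInv ν) {f : Eucl n → ℂ} (hf : HarmOn f (uBall n)) {R : ℝ} (hR : 0 < R)
    (hR1 : R < 1) {x : Eucl n} (hx : x ∈ uBall n) :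
    f (R • x) = ∫ ζ : uSphere n, f (R • (ζ : Eucl n)) * (poissonK n x ζ : ℂ) ∂ν := by
  by_cases h0 : x = 0
  · subst h0
    simp only [poissonK_zero (norm_uSphere _), Complex.ofReal_one, mul_one, smul_zero]
    exact (integral_ray hn hν hf hR.le hR1).symm
  · have hx0 : 0 < ‖x‖ := norm_pos_iff.mpr h0
    have hη : ‖‖x‖⁻¹ • x‖ = 1 := by
      rw [norm_smul, norm_inv, norm_norm, inv_mul_cancel₀ hx0.ne']
    have hxη : ‖x‖ • ‖x‖⁻¹ • x = x := by
      rw [smul_smul, mul_inv_cancel₀ hx0.ne', one_smul]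
    have h := poisson_ray hn hν hf hR hR1 hx0 (mem_uBall.mp hx) hη
    simp only [poissonK_comm ‖x‖ (norm_uSphere _) hη, hxη, mul_smul] at h
    exact h.symm

/-! ### The integral estimate for conformally covariant weights -/

lemma continuous_poissonK_comp {n : ℕ} {X : Type*} [TopologicalSpace X] {g : X → Eucl n}
    {h : X → uSphere n} (hg : Continuous g) (hh : Continuous h) (hm : ∀ x, g x ∈ uBall n) :
    Continuous fun x => poissonK n (g x) (h x) := by
  have hh' : Continuous fun x => (h x : Eucl n) := continuous_subtype_val.comp hh
  refine Continuous.div (by fun_prop) (by fun_prop) fun x => ?_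
  have hx := mem_uBall.mp (hm x)
  refine pow_ne_zero n (norm_ne_zero_iff.mpr (sub_ne_zero.mpr fun e => ?_))
  rw [e, norm_uSphere] at hx
  exact lt_irrefl _ hx

/-- The estimate with `f` replaced by its dilate `f (R ·)`: Poisson's formula, Fubini's theorem
and the mean value property for the harmonic functions `w · P(φ ·, ζ)`. -/
lemma integral_wco_dilate_le {n : ℕ} (hn : 2 ≤ n) {ν : Measure (uSphere n)}
    [IsProbabilityMeasure ν] (hν : RotInv ν) {φ : Eucl n → Eucl n} {w : Eucl n → ℝ}
    (hmaps : MapsTo φ (uBall n) (uBall n)) (hφ : ContinuousOn φ (uBall n))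
    (hw : ContinuousOn w (uBall n)) (hw0 : ∀ x ∈ uBall n, 0 ≤ w x)
    (hharm : ∀ u : Eucl n → ℂ, HarmOn u (uBall n) → HarmOn (fun x => w x * u (φ x)) (uBall n))
    {f : Eucl n → ℂ} (hf : HarmOn f (uBall n)) {K R r : ℝ} (hR : 0 < R) (hR1 : R < 1)
    (hK : ∫ ζ : uSphere n, ‖f (R • (ζ : Eucl n))‖ ∂ν ≤ K) (hr : 0 ≤ r) (hr1 : r < 1) :
    ∫ ξ : uSphere n, w (r • (ξ : Eucl n)) * ‖f (R • φ (r • (ξ : Eucl n)))‖ ∂ν ≤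
      w 0 * ((1 + ‖φ 0‖) * (1 - ‖φ 0‖) ^ (1 - (n : ℝ))) * K := by
  have habr : |r| < 1 := by rwa [abs_of_nonneg hr]
  have habR : |R| < 1 := by rwa [abs_of_pos hR]
  have hm : ∀ ξ : uSphere n, r • (ξ : Eucl n) ∈ uBall n := fun ξ => by
    rw [mem_uBall, norm_smul_sphere]; exact habr
  have hmR : ∀ y ∈ uBall n, R • y ∈ uBall n := fun y hy => by
    rw [mem_uBall] at hy ⊢
    rw [norm_smul, Real.norm_eq_abs, abs_of_pos hR]
    nlinarith [norm_nonneg y]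
  have h0 : (0 : Eucl n) ∈ uBall n := by rw [mem_uBall, norm_zero]; exact one_pos
  have hc : Continuous fun ξ : uSphere n => r • (ξ : Eucl n) := by fun_prop
  have cφ : Continuous fun ξ : uSphere n => φ (r • (ξ : Eucl n)) := hφ.comp_continuous hc hm
  have cw : Continuous fun ξ : uSphere n => w (r • (ξ : Eucl n)) := hw.comp_continuous hc hm
  have cfR : Continuous fun ζ : uSphere n => ‖f (R • (ζ : Eucl n))‖ :=
    (continuous_ray hf.1.continuousOn habR).norm
  have cfφ : Continuous fun ξ : uSphere n => ‖f (R • φ (r • (ξ : Eucl n)))‖ :=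
    (hf.1.continuousOn.comp_continuous (cφ.const_smul R) fun ξ => hmR _ (hmaps (hm ξ))).norm
  have cP : Continuous fun p : uSphere n × uSphere n =>
      poissonK n (φ (r • (p.1 : Eucl n))) p.2 := by
    exact continuous_poissonK_comp (cφ.comp continuous_fst) continuous_snd
      fun p => hmaps (hm p.1)
  let G : uSphere n → uSphere n → ℝ := fun ξ ζ =>
    w (r • (ξ : Eucl n)) * (‖f (R • (ζ : Eucl n))‖ * poissonK n (φ (r • (ξ : Eucl n))) ζ)
  have cG : Continuous G.uncurry :=
    (cw.comp continuous_fst).mul ((cfR.comp continuous_snd).mul cP)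
  have cG1 : Continuous fun ξ => ∫ ζ, G ξ ζ ∂ν := by
    have := continuous_parametric_integral_of_continuous (μ := ν) cG isCompact_univ
    simp only [Measure.restrict_univ] at this
    exact this
  calc ∫ ξ : uSphere n, w (r • (ξ : Eucl n)) * ‖f (R • φ (r • (ξ : Eucl n)))‖ ∂ν
      ≤ ∫ ξ : uSphere n, ∫ ζ, G ξ ζ ∂ν ∂ν := by
        refine integral_mono (integrable_sphere (cw.mul cfφ)) (integrable_sphere cG1) fun ξ => ?_
        show w (r • (ξ : Eucl n)) * ‖f (R • φ (r • (ξ : Eucl n)))‖ ≤ ∫ ζ, G ξ ζ ∂ν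
        simp only [G]
        rw [integral_const_mul]
        refine mul_le_mul_of_nonneg_left ?_ (hw0 _ (hm ξ))
        rw [poisson_formula hn hν hf hR hR1 (hmaps (hm ξ))]
        refine (norm_integral_le_integral_norm _).trans (le_of_eq ?_)
        refine integral_congr_ae (Eventually.of_forall fun ζ => ?_)
        simp only [norm_mul, Complex.norm_real, Real.norm_eq_abs,
          abs_of_nonneg (poissonK_nonneg (hmaps (hm ξ)) ζ)]
    _ = ∫ ζ : uSphere n, ∫ ξ, G ξ ζ ∂ν ∂ν :=
        integral_integral_swap_of_hasCompactSupport cG (HasCompactSupport.of_compactSpace _)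
    _ = ∫ ζ : uSphere n, ‖f (R • (ζ : Eucl n))‖ * (w 0 * poissonK n (φ 0) ζ) ∂ν := by
        refine integral_congr_ae (Eventually.of_forall fun ζ => ?_)
        have h := integral_ray hn hν (hharm _ (harmOn_poissonK (ζ : Eucl n) (norm_uSphere ζ))) hr hr1
        have h2 : ∫ ξ : uSphere n, w (r • (ξ : Eucl n)) * poissonK n (φ (r • (ξ : Eucl n))) ζ ∂ν =
            w 0 * poissonK n (φ 0) ζ := by
          rw [← Complex.ofReal_inj, ← integral_complex_ofReal]
          push_cast
          exact h
        show ∫ ξ, G ξ ζ ∂ν = ‖f (R • (ζ : Eucl n))‖ * (w 0 * poissonK n (φ 0) ζ)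
        rw [← h2, ← integral_const_mul]
        refine integral_congr_ae (Eventually.of_forall fun ξ => ?_)
        simp only [G]
        ring
    _ ≤ ∫ ζ : uSphere n, ‖f (R • (ζ : Eucl n))‖ *
          (w 0 * ((1 + ‖φ 0‖) * (1 - ‖φ 0‖) ^ (1 - (n : ℝ)))) ∂ν := by
        have cP0 : Continuous fun ζ : uSphere n => poissonK n (φ 0) ζ := by
          exact continuous_poissonK_comp continuous_const continuous_id fun _ => hmaps h0
        refine integral_mono (integrable_sphere (cfR.mul (continuous_const.mul cP0)))
          (integrable_sphere (cfR.mul continuous_const)) fun ζ => ?_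
        exact mul_le_mul_of_nonneg_left (mul_le_mul_of_nonneg_left
          (poissonK_le (hmaps h0) (norm_uSphere ζ)) (hw0 0 h0)) (norm_nonneg _)
    _ ≤ _ := by
        rw [integral_mul_const, mul_comm]
        have h1 : 0 < 1 - ‖φ 0‖ := by have := mem_uBall.mp (hmaps h0); linarith
        exact mul_le_mul_of_nonneg_left hK (mul_nonneg (hw0 0 h0) (by positivity))

/-- The estimate for `f` itself, by letting `R → 1` in `integral_wco_dilate_le`. -/
lemma integral_wco_le {n : ℕ} (hn : 2 ≤ n) {ν : Measure (uSphere n)}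
    [IsProbabilityMeasure ν] (hν : RotInv ν) {φ : Eucl n → Eucl n} {w : Eucl n → ℝ}
    (hmaps : MapsTo φ (uBall n) (uBall n)) (hφ : ContinuousOn φ (uBall n))
    (hw : ContinuousOn w (uBall n)) (hw0 : ∀ x ∈ uBall n, 0 ≤ w x)
    (hharm : ∀ u : Eucl n → ℂ, HarmOn u (uBall n) → HarmOn (fun x => w x * u (φ x)) (uBall n))
    {f : Eucl n → ℂ} (hf : HarmOn f (uBall n)) {K : ℝ}
    (hK : ∀ R ∈ Ico (0 : ℝ) 1, ∫ ζ : uSphere n, ‖f (R • (ζ : Eucl n))‖ ∂ν ≤ K)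
    {r : ℝ} (hr : 0 ≤ r) (hr1 : r < 1) :
    ∫ ξ : uSphere n, w (r • (ξ : Eucl n)) * ‖f (φ (r • (ξ : Eucl n)))‖ ∂ν ≤
      w 0 * ((1 + ‖φ 0‖) * (1 - ‖φ 0‖) ^ (1 - (n : ℝ))) * K := by
  have habr : |r| < 1 := by rwa [abs_of_nonneg hr]
  have hm : ∀ ξ : uSphere n, r • (ξ : Eucl n) ∈ uBall n := fun ξ => by
    rw [mem_uBall, norm_smul_sphere]; exact habr
  have hc : Continuous fun ξ : uSphere n => r • (ξ : Eucl n) := by fun_prop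
  have cφ : Continuous fun ξ : uSphere n => φ (r • (ξ : Eucl n)) := hφ.comp_continuous hc hm
  have cw : Continuous fun ξ : uSphere n => w (r • (ξ : Eucl n)) := hw.comp_continuous hc hm
  let g : ℝ → ℝ := fun R =>
    ∫ ξ : uSphere n, w (r • (ξ : Eucl n)) * ‖f (R • φ (r • (ξ : Eucl n)))‖ ∂ν
  have hg : ContinuousOn g (Icc 0 1) := by
    rw [continuousOn_iff_continuous_domRestrict]
    have cG : Continuous (Function.uncurry fun (R : Icc (0 : ℝ) 1) (ξ : uSphere n) =>
        w (r • (ξ : Eucl n)) * ‖f ((R : ℝ) • φ (r • (ξ : Eucl n)))‖) := by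
      refine (cw.comp continuous_snd).mul (hf.1.continuousOn.comp_continuous
        ((continuous_subtype_val.comp continuous_fst).smul (cφ.comp continuous_snd)) ?_).norm
      rintro ⟨⟨R, hR0, hR1⟩, ξ⟩
      have h1 := mem_uBall.mp (hmaps (hm ξ))
      show R • φ (r • (ξ : Eucl n)) ∈ uBall n
      rw [mem_uBall, norm_smul, Real.norm_eq_abs, abs_of_nonneg hR0]
      nlinarith [norm_nonneg (φ (r • (ξ : Eucl n)))]
    have := continuous_parametric_integral_of_continuous (μ := ν) cG isCompact_univ
    simp only [Measure.restrict_univ] at this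
    exact this
  have hlim : Tendsto g (𝓝[Ioo 0 1] 1) (𝓝 (g 1)) :=
    ((hg 1 ⟨zero_le_one, le_rfl⟩).mono Ioo_subset_Icc_self)
  have hne : (𝓝[Ioo (0 : ℝ) 1] 1).NeBot := right_nhdsWithin_Ioo_neBot zero_lt_one
  have h1 : g 1 ≤ w 0 * ((1 + ‖φ 0‖) * (1 - ‖φ 0‖) ^ (1 - (n : ℝ))) * K := by
    refine le_of_tendsto hlim ?_
    filter_upwards [self_mem_nhdsWithin] with R hR
    exact integral_wco_dilate_le hn hν hmaps hφ hw hw0 hharm hf hR.1 hR.2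
      (hK R ⟨hR.1.le, hR.2⟩) hr hr1
  simpa [g] using h1

/-! ### Normal form of Möbius transformations -/

/-- `g` acts on finite points as the similarity `x ↦ b + l A x`. -/
def SimForm {n : ℕ} (g : EuclHat n → EuclHat n) : Prop :=
  ∃ (A : Eucl n ≃ₗᵢ[ℝ] Eucl n) (b : Eucl n) (l : ℝ), l ≠ 0 ∧
    ∀ x : Eucl n, g x = ((b + l • A x : Eucl n) : EuclHat n)

/-- `g` acts on finite points as an inversion followed by a similarity, its pole `a` going
to `∞`. -/
def InvForm {n : ℕ} (g : EuclHat n → EuclHat n) : Prop :=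
  ∃ (A : Eucl n ≃ₗᵢ[ℝ] Eucl n) (a b : Eucl n) (l : ℝ), l ≠ 0 ∧ g a = OnePoint.infty ∧
    ∀ x : Eucl n, x ≠ a → g x = ((invMap a b l A x : Eucl n) : EuclHat n)

/-- Reflection in the hyperplane orthogonal to `e`. -/
lemma exists_refl {n : ℕ} (e : Eucl n) : ∃ R : Eucl n ≃ₗᵢ[ℝ] Eucl n,
    ∀ y, R y = y - (2 * ⟪y, e⟫_ℝ / ‖e‖ ^ 2) • e := by
  refine ⟨(ℝ ∙ e).reflection.trans (LinearIsometryEquiv.neg ℝ), fun y => ?_⟩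
  rw [LinearIsometryEquiv.trans_apply, Submodule.reflection_singleton_apply,
    LinearIsometryEquiv.coe_neg, real_inner_comm]
  simp only [RCLike.ofReal_real_eq_id, id]
  module

lemma sphereRefl_coe {n : ℕ} (a : Eucl n) (r : ℝ) {x : Eucl n} (hx : x ≠ a) :
    sphereRefl n a r x = ((a + (r ^ 2 / ‖x - a‖ ^ 2) • (x - a) : Eucl n) : EuclHat n) := by
  show (if x = a then _ else _) = _
  rw [if_neg hx]

lemma sphereRefl_self {n : ℕ} (a : Eucl n) (r : ℝ) :
    sphereRefl n a r a = OnePoint.infty := by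
  show (if a = a then _ else _) = _
  rw [if_pos rfl]

lemma form_hyperRefl {n : ℕ} {a : Eucl n} (t : ℝ) (ha : ‖a‖ = 1) {g : EuclHat n → EuclHat n}
    (hg : SimForm g ∨ InvForm g) :
    SimForm (hyperRefl n a t ∘ g) ∨ InvForm (hyperRefl n a t ∘ g) := by
  obtain ⟨R, hR⟩ := exists_refl a
  have hR' : ∀ y, y - (2 * (⟪y, a⟫_ℝ - t)) • a = R y + (2 * t) • a := by
    intro y
    rw [hR, ha]
    module
  rcases hg with ⟨A, b, l, hl, h⟩ | ⟨A, p, b, l, hl, hp, h⟩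
  · refine Or.inl ⟨A.trans R, R b + (2 * t) • a, l, hl, fun x => ?_⟩
    rw [Function.comp, h]
    show ((_ : Eucl n) : EuclHat n) = _
    rw [hR', map_add, map_smul, LinearIsometryEquiv.trans_apply, add_right_comm]
  · refine Or.inr ⟨A.trans R, p, R b + (2 * t) • a, l, hl, ?_, fun x hx => ?_⟩
    · rw [Function.comp, hp]; rfl
    · rw [Function.comp, h x hx]
      show ((_ : Eucl n) : EuclHat n) = _
      rw [hR', invMap, invMap, map_add, map_smul, LinearIsometryEquiv.trans_apply,
        add_right_comm]

lemma form_sphereRefl_sim {n : ℕ} (a : Eucl n) {r : ℝ} (hr : 0 < r) {g : EuclHat n → EuclHat n}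
    (hg : SimForm g) : InvForm (sphereRefl n a r ∘ g) := by
  obtain ⟨A, b, l, hl, h⟩ := hg
  set p := A.symm (l⁻¹ • (a - b)) with hp
  have hy : ∀ x, b + l • A x - a = l • A (x - p) := by
    intro x
    rw [map_sub, hp, A.apply_symm_apply, smul_sub, smul_smul, mul_inv_cancel₀ hl, one_smul]
    abel
  refine ⟨A, p, a, r ^ 2 / l, by positivity, ?_, fun x hx => ?_⟩
  · have : b + l • A p = a := by
      have := hy p
      rwa [sub_self, map_zero, smul_zero, sub_eq_zero] at this
    rw [Function.comp, h, this, sphereRefl_self]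
  · have hx0 : x - p ≠ 0 := sub_ne_zero.mpr hx
    have hx1 : 0 < ‖x - p‖ := norm_pos_iff.mpr hx0
    have hne : b + l • A x ≠ a := by
      rw [← sub_ne_zero, hy, ← norm_ne_zero_iff, norm_smul, A.norm_map]
      exact mul_ne_zero (norm_ne_zero_iff.mpr hl) hx1.ne'
    rw [Function.comp, h, sphereRefl_coe a r hne, hy, norm_smul, A.norm_map, invMap, smul_smul,
      mul_pow, Real.norm_eq_abs, sq_abs]
    congr 3
    field_simp

/-- Composing an inversion with a second one gives a similarity if the second is centred at the
image `b` of `∞`, and otherwise again an inversion, whose pole is the preimage of the centre. -/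
lemma form_sphereRefl_inv {n : ℕ} (c : Eucl n) {r : ℝ} (hr : 0 < r) {g : EuclHat n → EuclHat n}
    (hg : InvForm g) : SimForm (sphereRefl n c r ∘ g) ∨ InvForm (sphereRefl n c r ∘ g) := by
  obtain ⟨A, a, b, l, hl, ha, h⟩ := hg
  have hinf : sphereRefl n c r OnePoint.infty = (c : EuclHat n) := rfl
  by_cases hd : b = c
  · subst hd
    refine Or.inl ⟨A, b - (r ^ 2 / l) • A a, r ^ 2 / l, by positivity, fun x => ?_⟩
    have e1 : b - (r ^ 2 / l) • A a + (r ^ 2 / l) • A x = b + (r ^ 2 / l) • A (x - a) := by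
      rw [map_sub]; module
    rw [Function.comp, e1]
    by_cases hx : x = a
    · rw [hx, ha, hinf, sub_self, map_zero, smul_zero, add_zero]
    · have hx1 : 0 < ‖x - a‖ := norm_pos_iff.mpr (sub_ne_zero.mpr hx)
      have hy : invMap a b l A x - b = (l * (‖x - a‖ ^ 2)⁻¹) • A (x - a) := by
        rw [invMap, add_sub_cancel_left]
      have hne : invMap a b l A x ≠ b := by
        rw [← sub_ne_zero, hy, ← norm_ne_zero_iff, norm_smul, A.norm_map]
        exact mul_ne_zero (norm_ne_zero_iff.mpr (by positivity)) hx1.ne'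
      rw [h x hx, sphereRefl_coe b r hne, hy, norm_smul, A.norm_map, smul_smul,
        mul_pow, Real.norm_eq_abs, sq_abs]
      congr 3
      field_simp
  · right
    set e := A.symm (b - c) with he
    have hAe : A e = b - c := A.apply_symm_apply _
    have he0 : e ≠ 0 := fun h0 => by
      rw [h0, map_zero] at hAe
      exact hd (sub_eq_zero.mp hAe.symm)
    have he1 : 0 < ‖e‖ := norm_pos_iff.mpr he0
    obtain ⟨R, hR⟩ := exists_refl e
    set s := l / ‖e‖ ^ 2 with hs
    have hs0 : s ≠ 0 := by positivity
    have hsl : l = s * ‖e‖ ^ 2 := by rw [hs]; field_simp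
    -- the new pole is the preimage of the centre `c`
    set a' := a - s • e with ha'
    have hu : ∀ x, x - a' = (x - a) + s • e := fun x => by rw [ha']; abel
    have hq : ∀ x, ‖x - a‖ ^ 2 = ‖x - a'‖ ^ 2 - 2 * s * ⟪x - a', e⟫_ℝ + s ^ 2 * ‖e‖ ^ 2 := by
      intro x
      rw [show x - a = (x - a') - s • e by rw [hu]; abel, norm_sub_sq_real, inner_smul_right,
        norm_smul, mul_pow, Real.norm_eq_abs, sq_abs]
      ring
    have hid : ∀ x, ‖x - a‖ ^ 2 • e + l • (x - a) = ‖x - a'‖ ^ 2 • e + l • R (x - a') := by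
      intro x
      rw [hR, hq, show x - a = (x - a') - s • e by rw [hu]; abel, hsl]
      have : s * ‖e‖ ^ 2 * (2 * ⟪x - a', e⟫_ℝ / ‖e‖ ^ 2) = 2 * s * ⟪x - a', e⟫_ℝ := by
        field_simp
      rw [smul_sub (s * ‖e‖ ^ 2) (x - a') ((2 * ⟪x - a', e⟫_ℝ / ‖e‖ ^ 2) • e), smul_smul, this]
      module
    -- the candidate formula, written in terms of the old data
    have hform : ∀ x, x ≠ a' → invMap a' (c + (r ^ 2 / ‖e‖ ^ 2) • A e) (r ^ 2 * s) (R.trans A) x =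
        c + (r ^ 2 / (‖e‖ ^ 2 * ‖x - a'‖ ^ 2)) • A (‖x - a‖ ^ 2 • e + l • (x - a)) := by
      intro x hx
      have hx1 : 0 < ‖x - a'‖ := norm_pos_iff.mpr (sub_ne_zero.mpr hx)
      have k1 : r ^ 2 / ‖e‖ ^ 2 = r ^ 2 / (‖e‖ ^ 2 * ‖x - a'‖ ^ 2) * ‖x - a'‖ ^ 2 := by
        field_simp
      have k2 : r ^ 2 * s * (‖x - a'‖ ^ 2)⁻¹ = r ^ 2 / (‖e‖ ^ 2 * ‖x - a'‖ ^ 2) * l := by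
        rw [hs]
        field_simp
      rw [hid, invMap, LinearIsometryEquiv.trans_apply, map_add, map_smul, map_smul, k1, k2]
      module
    have hy : ∀ x, x ≠ a → invMap a b l A x - c =
        (‖x - a‖ ^ 2)⁻¹ • A (‖x - a‖ ^ 2 • e + l • (x - a)) := by
      intro x hx
      have hx1 : 0 < ‖x - a‖ := norm_pos_iff.mpr (sub_ne_zero.mpr hx)
      rw [invMap, map_add, map_smul, map_smul, smul_add, smul_smul, smul_smul,
        inv_mul_cancel₀ (by positivity), one_smul, hAe, mul_comm l]
      abel
    have hnorm : ∀ x, ‖‖x - a‖ ^ 2 • e + l • (x - a)‖ ^ 2 =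
        ‖e‖ ^ 2 * ‖x - a‖ ^ 2 * ‖x - a'‖ ^ 2 := by
      intro x
      rw [hu x, norm_add_sq_real, norm_add_sq_real, inner_smul_right, inner_smul_right,
        inner_smul_left, norm_smul, norm_smul, norm_smul, real_inner_comm e (x - a), hsl]
      simp only [mul_pow, Real.norm_eq_abs, sq_abs, abs_pow, abs_norm, abs_mul]
      simp
      ring
    refine ⟨R.trans A, a', c + (r ^ 2 / ‖e‖ ^ 2) • A e, r ^ 2 * s, by positivity, ?_,
      fun x hx => ?_⟩
    · have hne : a' ≠ a := by
        rw [ha', Ne, sub_eq_self]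
        exact smul_ne_zero hs0 he0
      have h0 := hnorm a'
      rw [sub_self, norm_zero] at h0
      have h1 : ‖a' - a‖ ^ 2 • e + l • (a' - a) = 0 := by
        rw [← norm_eq_zero, ← sq_eq_zero_iff, h0]; ring
      have h2 := hy a' hne
      rw [h1, map_zero, smul_zero, sub_eq_zero] at h2
      rw [Function.comp, h a' hne, h2, sphereRefl_self]
    · rw [hform x hx, Function.comp]
      by_cases hxa : x = a
      · rw [hxa, ha, hinf]
        simp
      · have hx1 : 0 < ‖x - a‖ := norm_pos_iff.mpr (sub_ne_zero.mpr hxa)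
        have hx2 : 0 < ‖x - a'‖ := norm_pos_iff.mpr (sub_ne_zero.mpr hx)
        have hN : ‖invMap a b l A x - c‖ ^ 2 = ‖e‖ ^ 2 * ‖x - a'‖ ^ 2 / ‖x - a‖ ^ 2 := by
          rw [hy x hxa, norm_smul, A.norm_map, mul_pow, hnorm, norm_inv, norm_pow, norm_norm]
          field_simp
        have hne : invMap a b l A x ≠ c := by
          intro h0
          rw [h0, sub_self, norm_zero] at hN
          have : 0 < ‖e‖ ^ 2 * ‖x - a'‖ ^ 2 / ‖x - a‖ ^ 2 := by positivity
          rw [← hN] at this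
          norm_num at this
        rw [h x hxa, sphereRefl_coe c r hne, hN, hy x hxa, smul_smul]
        congr 3
        field_simp

/-- Every Möbius transformation is a similarity or an inversion followed by a similarity. -/
lemma mobius_form {n : ℕ} {g : EuclHat n → EuclHat n} (hg : IsMobiusHat n g) :
    SimForm g ∨ InvForm g := by
  obtain ⟨L, -, hL, rfl⟩ := hg
  induction L with
  | nil => exact Or.inl ⟨LinearIsometryEquiv.refl ℝ _, 0, 1, one_ne_zero, fun x => by simp⟩
  | cons f L ih =>
    have ih := ih fun f hf => hL f (List.mem_cons_of_mem _ hf)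
    rw [List.foldr_cons]
    rcases hL f List.mem_cons_self with ⟨a, r, hr, rfl⟩ | ⟨a, t, ha, rfl⟩
    · rcases ih with ih | ih
      · exact Or.inr (form_sphereRefl_sim a hr ih)
      · exact form_sphereRefl_inv a hr ih
    · exact form_hyperRefl t ha ih

/-! ### The conformal factor -/

/-- A conformal derivative `c R` with `R` orthogonal has conformal factor `|c|`. -/
lemma normDeriv_eq {n : ℕ} (hn : n ≠ 0) {φ : Eucl n → Eucl n} {x : Eucl n} (c : ℝ)
    (R : Eucl n ≃ₗᵢ[ℝ] Eucl n) (h : ∀ j, fderiv ℝ φ x (basisV n j) = c • R (basisV n j)) :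
    normDeriv φ x = |c| := by
  let N : Matrix (Fin n) (Fin n) ℝ := Matrix.of fun i j => R (basisV n j) i
  have hJ : jacMatrix φ x = c • N := by
    ext i j
    simp [jacMatrix, N, h]
  have hN : N.transpose * N = 1 := by
    ext i j
    rw [Matrix.mul_apply]
    have h1 : ∑ k, N.transpose i k * N k j = ⟪R (basisV n i), R (basisV n j)⟫_ℝ := by
      rw [PiLp.inner_apply]
      simp [N, mul_comm]
    rw [h1, R.inner_map_map, inner_basisV, basisV, Matrix.one_apply]
    simp [eq_comm]
  have hdet : |N.det| = 1 := by
    have := congrArg Matrix.det hN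
    rw [Matrix.det_mul, Matrix.det_transpose, Matrix.det_one] at this
    rcases mul_self_eq_one_iff.mp this with h | h <;> simp [h]
  rw [normDeriv, hJ, Matrix.det_smul, abs_mul, hdet, mul_one, Fintype.card_fin, abs_pow,
    Real.pow_rpow_inv_natCast (abs_nonneg c) hn]

lemma fderiv_similarity {n : ℕ} (b : Eucl n) (l : ℝ) (A : Eucl n ≃ₗᵢ[ℝ] Eucl n) (x e : Eucl n) :
    fderiv ℝ (fun x => b + l • A x) x e = l • A e := by
  have h : HasFDerivAt (fun x => b + l • A x) (l • (A : Eucl n →L[ℝ] Eucl n)) x :=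
    ((A : Eucl n →L[ℝ] Eucl n).hasFDerivAt.const_smul l).const_add b
  rw [h.fderiv]
  rfl

/-- The derivative of an inversion is a multiple of a reflection. -/
lemma fderiv_invMap {n : ℕ} (a b : Eucl n) (l : ℝ) (A : Eucl n ≃ₗᵢ[ℝ] Eucl n) {x : Eucl n}
    (hx : x ≠ a) (j : Fin n) : fderiv ℝ (invMap a b l A) x (basisV n j) =
      (-(l * (‖x - a‖ ^ 2)⁻¹)) • ((ℝ ∙ (x - a)).reflection.trans A) (basisV n j) := by
  have hx0 : x + (0 : ℝ) • basisV n j = x := by simp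
  have h1 := (invMap_line a b x (basisV n j) (norm_basisV j) l A 0 (by rwa [hx0])).2
  have hl : HasDerivAt (fun t : ℝ => x + t • basisV n j) (basisV n j) 0 := by
    simpa using ((hasDerivAt_id (0 : ℝ)).smul_const (basisV n j)).const_add x
  have h2 : HasFDerivAt (invMap a b l A) (fderiv ℝ (invMap a b l A) x)
      (x + (0 : ℝ) • basisV n j) := by
    rw [hx0]
    exact ((contDiffAt_invMap a b x hx l A).differentiableAt two_ne_zero).hasFDerivAt
  have h5 := h2.comp_hasDerivAt 0 hl
  have h4 : HasDerivAt (fun t : ℝ => invMap a b l A (x + t • basisV n j))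
      (fderiv ℝ (invMap a b l A) x (basisV n j)) 0 := h5
  have h3 := h4.unique h1
  rw [h3, hx0, LinearIsometryEquiv.trans_apply, Submodule.reflection_singleton_apply]
  simp only [map_sub, RCLike.ofReal_real_eq_id, id, add_zero, zero_smul, map_nsmul, map_smul]
  module

/-- The weight `|Dφ|^{(n-2)/2}` of a Möbius map of the ball into itself is conformally
covariant: `|Dφ|^{(n-2)/2} u ∘ φ` is harmonic whenever `u` is. -/
lemma mobius_weight {n : ℕ} (hn : n ≠ 0) {φ : Eucl n → Eucl n} (hφ : IsMobiusRestr n φ (uBall n))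
    (hmaps : MapsTo φ (uBall n) (uBall n)) : ContinuousOn φ (uBall n) ∧
    ∀ u : Eucl n → ℂ, HarmOn u (uBall n) → HarmOn
      (fun x => ((normDeriv φ x ^ (((n : ℝ) - 2) / 2) : ℝ) : ℂ) * u (φ x)) (uBall n) := by
  obtain ⟨g, hg, hgφ⟩ := hφ
  rcases mobius_form hg with ⟨A, b, l, hl, h⟩ | ⟨A, a, b, l, hl, ha, h⟩
  · have hE : EqOn φ (fun x => b + l • A x) (uBall n) := fun x hx =>
      OnePoint.coe_injective ((hgφ x hx).symm.trans (h x))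
    have hnd : ∀ x ∈ uBall n, normDeriv φ x = |l| := fun x hx => by
      refine normDeriv_eq hn l A fun j => ?_
      rw [(hE.eventuallyEq_of_mem (isOpen_uBall.mem_nhds hx)).fderiv_eq, fderiv_similarity]
    refine ⟨ContinuousOn.congr (by fun_prop) hE, fun u hu => ?_⟩
    refine harmOn_congr isOpen_uBall (harmOn_const_mul isOpen_uBall
      (harmOn_similarity isOpen_uBall isOpen_uBall hu b l A fun x hx => ?_)
      ((|l| ^ (((n : ℝ) - 2) / 2) : ℝ) : ℂ)) fun x hx => ?_
    · have := hmaps hx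
      rwa [hE hx] at this
    · simp only [hnd x hx, hE hx]
  · have haB : a ∉ uBall n := fun haB => by
      have := hgφ a haB
      rw [ha] at this
      exact OnePoint.infty_ne_coe _ this
    have hne : ∀ x ∈ uBall n, x ≠ a := fun x hx e => haB (e ▸ hx)
    have hE : EqOn φ (invMap a b l A) (uBall n) := fun x hx =>
      OnePoint.coe_injective ((hgφ x hx).symm.trans (h x (hne x hx)))
    have hnd : ∀ x ∈ uBall n, normDeriv φ x = |l| * (‖x - a‖ ^ 2)⁻¹ := fun x hx => by
      have hd : ∀ j, fderiv ℝ φ x (basisV n j) = (-(l * (‖x - a‖ ^ 2)⁻¹)) •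
          ((ℝ ∙ (x - a)).reflection.trans A) (basisV n j) := fun j => by
        rw [(hE.eventuallyEq_of_mem (isOpen_uBall.mem_nhds hx)).fderiv_eq]
        exact fderiv_invMap a b l A (hne x hx) j
      rw [normDeriv_eq hn _ _ hd, abs_neg, abs_mul, abs_inv, abs_pow, abs_norm]
    refine ⟨ContinuousOn.congr (fun x hx =>
      (contDiffAt_invMap a b x (hne x hx) l A).continuousAt.continuousWithinAt) hE, fun u hu => ?_⟩
    refine harmOn_congr isOpen_uBall (harmOn_const_mul isOpen_uBall
      (harmOn_kelvin isOpen_uBall isOpen_uBall hu a b l A haB fun x hx => ?_)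
      ((|l| ^ (((n : ℝ) - 2) / 2) : ℝ) : ℂ)) fun x hx => ?_
    · have := hmaps hx
      rwa [hE hx] at this
    · have hw : (|l| * (‖x - a‖ ^ 2)⁻¹) ^ (((n : ℝ) - 2) / 2) =
          |l| ^ (((n : ℝ) - 2) / 2) * (‖x - a‖ ^ 2) ^ ((2 - (n : ℝ)) / 2) := by
        rw [Real.mul_rpow (abs_nonneg _) (by positivity), Real.inv_rpow (by positivity),
          ← Real.rpow_neg (by positivity)]
        congr 2
        ring
      simp only [hnd x hx, hE hx, hw, Complex.real_smul, Complex.ofReal_mul, mul_assoc]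

/-! ### The norm estimate -/

lemma hpNormSet_one (n : ℕ) (f : Eucl n → ℂ) : hpNormSet n (1 : ℝ≥0∞).toReal f =
    (fun r : ℝ => ∫ ζ, ‖f (r • ζ)‖ ∂(sphMeasure n)) '' Ico (0 : ℝ) 1 := by
  simp [hpNormSet]

lemma memHp_one {n : ℕ} {f : Eucl n → ℂ} : MemHp n 1 f ↔ HarmOn f (uBall n) ∧
    BddAbove ((fun r : ℝ => ∫ ζ, ‖f (r • ζ)‖ ∂(sphMeasure n)) '' Ico (0 : ℝ) 1) := by
  rw [MemHp, if_neg ENNReal.one_ne_top, hpNormSet_one]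

lemma hpNorm_one {n : ℕ} (f : Eucl n → ℂ) : hpNorm n 1 f =
    sSup ((fun r : ℝ => ∫ ζ, ‖f (r • ζ)‖ ∂(sphMeasure n)) '' Ico (0 : ℝ) 1) := by
  rw [hpNorm, if_neg ENNReal.one_ne_top, hpNormSet_one]

/-- Case I, (3.7): For `n ≥ 3`, `φ` the restriction to `B` of a Möbius
transformation of `ℝ̂ⁿ` with `φ(B) ⊆ B` and `ψ = c·|Dφ|^{(n−2)/2}`, the operator `W_{φ,ψ}`
is bounded on `h¹(B)` with `‖W_{φ,ψ}‖ ≤ (1+|φ(0)|)(1−|φ(0)|)^{1−n}|ψ(0)|`. -/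
theorem wco_bound_h1 (n : ℕ) (hn : 3 ≤ n)
    (φ : Eucl n → Eucl n) (hφ : IsMobiusRestr n φ (uBall n))
    (hmaps : Set.MapsTo φ (uBall n) (uBall n))
    (c : ℂ) (ψ : Eucl n → ℂ)
    (hψ : ∀ x ∈ uBall n, ψ x = c * (↑(normDeriv φ x ^ (((n : ℝ) - 2) / 2)) : ℂ)) :
    (∀ f, MemHp n 1 f → MemHp n 1 (wco φ ψ f)) ∧
    ∀ f, MemHp n 1 f →
      hpNorm n 1 (wco φ ψ f) ≤
        (1 + ‖φ 0‖) * (1 - ‖φ 0‖) ^ (1 - (n : ℝ)) * ‖ψ 0‖ * hpNorm n 1 f := by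
  have hn2 : 2 ≤ n := by omega
  have hn0 : n ≠ 0 := by omega
  obtain ⟨hφc, hharm⟩ := mobius_weight hn0 hφ hmaps
  let w : Eucl n → ℝ := fun x => normDeriv φ x ^ (((n : ℝ) - 2) / 2)
  have hw0 : ∀ x, 0 ≤ w x := fun x =>
    Real.rpow_nonneg (Real.rpow_nonneg (abs_nonneg _) _) _
  have hwc : ContinuousOn w (uBall n) := by
    have h1 := (hharm (fun _ => 1) (by simpa using harmOn_affine 1 0 (uBall n))).1.continuousOn
    simpa [Function.comp_def] using Complex.continuous_re.comp_continuousOn h1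
  have h0 : (0 : Eucl n) ∈ uBall n := by rw [mem_uBall, norm_zero]; exact one_pos
  have hψ0 : ‖ψ 0‖ = ‖c‖ * w 0 := by
    rw [hψ 0 h0, norm_mul, Complex.norm_real, Real.norm_eq_abs, abs_of_nonneg (hw0 0)]
  have hH : ∀ f, MemHp n 1 f → HarmOn (wco φ ψ f) (uBall n) := by
    intro f hf
    refine harmOn_congr isOpen_uBall (harmOn_const_mul isOpen_uBall (hharm f hf.1) c) ?_
    intro x hx
    simp only [wco, hψ x hx, mul_assoc]
  have key : ∀ f, MemHp n 1 f → ∀ y ∈ (fun r : ℝ => ∫ ζ, ‖wco φ ψ f (r • ζ)‖ ∂(sphMeasure n)) ''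
      Ico (0 : ℝ) 1, y ≤
        (1 + ‖φ 0‖) * (1 - ‖φ 0‖) ^ (1 - (n : ℝ)) * ‖ψ 0‖ * hpNorm n 1 f := by
    rintro f hf y ⟨r, hr, rfl⟩
    rw [memHp_one] at hf
    rw [hpNorm_one]
    simp only
    rcases sphMeasure_cases n with hz | ⟨ν, hp, hν, hinteg⟩
    · simp [hz, (nonempty_Ico.mpr (zero_lt_one' ℝ)).image_const]
    · have hK : ∀ R ∈ Ico (0 : ℝ) 1, ∫ ζ : uSphere n, ‖f (R • (ζ : Eucl n))‖ ∂ν ≤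
          sSup ((fun r : ℝ => ∫ ζ, ‖f (r • ζ)‖ ∂(sphMeasure n)) '' Ico (0 : ℝ) 1) := by
        intro R hR
        rw [← hinteg fun x => ‖f (R • x)‖]
        exact le_csSup hf.2 ⟨R, hR, rfl⟩
      have hmain := integral_wco_le hn2 hν hmaps hφc hwc (fun x _ => hw0 x) hharm hf.1 hK hr.1 hr.2
      have habr : |r| < 1 := by rw [abs_of_nonneg hr.1]; exact hr.2
      have heq : ∀ ζ : uSphere n, ‖wco φ ψ f (r • (ζ : Eucl n))‖ =
          ‖c‖ * (w (r • (ζ : Eucl n)) * ‖f (φ (r • (ζ : Eucl n)))‖) := by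
        intro ζ
        rw [wco, hψ _ (by rw [mem_uBall, norm_smul_sphere]; exact habr), norm_mul, norm_mul,
          Complex.norm_real, Real.norm_eq_abs, abs_of_nonneg (hw0 _), mul_assoc]
      rw [hinteg fun x => ‖wco φ ψ f (r • x)‖]
      simp_rw [heq]
      rw [integral_const_mul, hψ0]
      refine (mul_le_mul_of_nonneg_left hmain (norm_nonneg c)).trans (le_of_eq ?_)
      ring
  refine ⟨fun f hf => memHp_one.mpr ⟨hH f hf, ⟨_, key f hf⟩⟩, fun f hf => ?_⟩
  rw [hpNorm_one (wco φ ψ f)]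
  exact csSup_le ((nonempty_Ico.mpr zero_lt_one).image _) (key f hf)
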